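/- arXiv:1705.09947 — 11 statements merged into one kernel-verified Lean document; each statement's English description precedes it below -/
import Mathlib

section
/- Let $X_u, X_s$ be Banach spaces and let $X = X_u \times X_s$ be equipped with the norm $\|(x_u,x_s)\| = \max\{\|x_u\|,\|x_s\|\}$. Let $L_u : X_u \to X_u$ be a bounded linear bijection with bounded inverse satisfying $\|L_u^{-1}\| \le a^{-1}$, let $L_s : X_s \to X_s$ be a bounded linear operator with $\|L_s\| \le b$, where $0 < b < \rho < a$, and let $\gamma > 0$ satisfy $b + 2\gamma < \rho < a - 2\gamma$. Let $N : X \to X$ be Lipschitz continuous with Lipschitz constant at most $\gamma$ and $N(0)=0$, and set $S = L + N$ where $L(x_u,x_s) = (L_u x_u, L_s x_s)$. Then there exists a map $\theta : X_u \to X_s$ with $\theta(0) = 0$ and Lipschitz constant at most $\gamma/(a-b-3\gamma) < 1$, such that the set $W^u = \{(\xi, \theta(\xi)) : \xi \in X_u\}$ satisfies $S(W^u) = W^u$, and $\|S(x) - S(z)\| \ge (a-2\gamma)\|x - z\|$ for all $x, z \in W^u$; in particular $S$ restricted to $W^u$ is a bijection of $W^u$ onto itself whose inverse is Lipschitz with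 constant at most $(a-2\gamma)^{-1} < \rho^{-1}$. -/
/-!
The unstable manifold is the fixed point of the graph transform `θ ↦ φ`, where `S` maps the graph
of `θ` onto the graph of `φ`. Compare an arbitrary point `(x, y)` with `(x, θ x)`, the point of the
graph of `θ` above the same `x`. After applying `S` the second coordinates are at most
`(b + γ) * dist y (θ x)` apart, and the first coordinates at most `γ * dist y (θ x)` apart.
Since `φ` is `1`-Lipschitz, the vertical distance to the graph has been multiplied by at most
`b + 2γ`. As `S` expands the distance to the fixed point along a graph by at least `a - γ`, the
graph transform contracts the distance `sup dist (θ x) (θ' x) / dist x x₀` by the factor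
`(b + 2γ) / (a - γ) < 1`. The same inequality, applied to the limit of the iterates, shows that its
graph is invariant.
-/

open Filter Function Set Topology
open scoped NNReal

theorem dist_prodMk_graph {X Y : Type*} [PseudoMetricSpace X] [PseudoMetricSpace Y] {θ : X → Y}
    (hθ : LipschitzWith 1 θ) (x y : X) : dist (x, θ x) (y, θ y) = dist x y :=
  max_eq_left (by simpa using hθ.dist_le_mul x y)

theorem exists_lipschitzWith_comp_eq {X Y Z : Type*} [PseudoMetricSpace X] [MetricSpace Y]
    {κ : ℝ≥0} {f : Z → X} {g : Z → Y} (hf : Surjective f)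
    (hfg : ∀ z w, dist (g z) (g w) ≤ κ * dist (f z) (f w)) :
    ∃ φ : X → Y, LipschitzWith κ φ ∧ ∀ z, φ (f z) = g z := by
  refine ⟨g ∘ surjInv hf, .of_dist_le_mul fun x y ↦ ?_, fun z ↦ ?_⟩
  · simpa only [comp_apply, surjInv_eq hf] using hfg (surjInv hf x) (surjInv hf y)
  · simpa [surjInv_eq hf] using hfg (surjInv hf (f z)) z

theorem surjective_add_of_antilipschitzWith {X E : Type*} [MetricSpace X] [CompleteSpace X]
    [Nonempty X] [SeminormedAddCommGroup E] {K L : ℝ≥0} {f g : X → E} (hf : Surjective f)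
    (hfK : AntilipschitzWith K f) (hg : LipschitzWith L g) (hKL : K * L < 1) :
    Surjective fun x ↦ f x + g x := by
  intro ξ
  have hinv : LipschitzWith K (surjInv hf) := hfK.to_rightInverse (rightInverse_surjInv hf)
  have hcontr : ContractingWith (K * L) fun x ↦ surjInv hf (ξ - g x) :=
    ⟨hKL, by simpa [comp_def] using hinv.comp ((LipschitzWith.const ξ).sub hg)⟩
  obtain ⟨x, hx⟩ : ∃ x, surjInv hf (ξ - g x) = x := ⟨_, hcontr.fixedPoint_isFixedPt⟩
  exact ⟨x, by simpa [surjInv_eq hf, eq_sub_iff_add_eq, eq_comm] using congrArg f hx⟩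

theorem mul_norm_sub_le_norm_map_sub {𝕜 E F : Type*} [NontriviallyNormedField 𝕜]
    [SeminormedAddCommGroup E] [NormedSpace 𝕜 E] [SeminormedAddCommGroup F] [NormedSpace 𝕜 F]
    {a : ℝ} (ha : 0 < a) {e : E ≃L[𝕜] F} (he : ‖(e.symm : F →L[𝕜] E)‖ ≤ a⁻¹) (x y : E) :
    a * ‖x - y‖ ≤ ‖e x - e y‖ := by
  rw [← le_inv_mul_iff₀ ha]
  simpa using (e.symm : F →L[𝕜] E).le_of_opNorm_le he (e x - e y)

section GraphTransform

variable {X Y : Type*} [MetricSpace X] [MetricSpace Y] {a b γ : ℝ} {κ : ℝ≥0}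
  {S : X × Y → X × Y} {θ θ' φ φ' : X → Y} {x₀ : X} {y₀ : Y}

/-- `φ` is the graph transform of `θ` under `S`: the map `S` sends the graph of `θ` into that of
`φ`. The graph of `θ` is invariant when `θ` is its own graph transform. -/
def IsGraphTransform (S : X × Y → X × Y) (θ φ : X → Y) : Prop :=
  ∀ x, φ (S (x, θ x)).1 = (S (x, θ x)).2

/-- `S` is hyperbolic with rates `a`, `b` and coupling `γ`: up to errors of size `γ` times the
distance in the product, it expands first coordinates by `a` and contracts second coordinates by
`b`, and the first coordinate of `S` depends on the second one with Lipschitz constant `γ`. The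
last field, that graphs of `1`-Lipschitz maps project onto `X` after applying `S`, makes graph
transforms everywhere defined. -/
structure IsHyperbolicWith (a b γ : ℝ) (S : X × Y → X × Y) : Prop where
  mul_dist_fst_le : ∀ p q, a * dist p.1 q.1 ≤ dist (S p).1 (S q).1 + γ * dist p q
  dist_snd_le : ∀ p q, dist (S p).2 (S q).2 ≤ b * dist p.2 q.2 + γ * dist p q
  dist_fst_le : ∀ x y y', dist (S (x, y)).1 (S (x, y')).1 ≤ γ * dist y y'
  surjective_fst_graph : ∀ θ : X → Y, LipschitzWith 1 θ → Surjective fun x ↦ (S (x, θ x)).1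

namespace IsHyperbolicWith

theorem mul_dist_le_dist_fst_graph (hS : IsHyperbolicWith a b γ S) (hθ : LipschitzWith 1 θ)
    (x y : X) : (a - γ) * dist x y ≤ dist (S (x, θ x)).1 (S (y, θ y)).1 := by
  have h := hS.mul_dist_fst_le (x, θ x) (y, θ y)
  rw [dist_prodMk_graph hθ] at h
  linarith

theorem dist_snd_graph_le (hS : IsHyperbolicWith a b γ S) (hb : 0 ≤ b) (hκ : κ ≤ 1)
    (hcone : b * κ + γ ≤ κ * (a - γ)) (hθ : LipschitzWith κ θ) (x y : X) :
    dist (S (x, θ x)).2 (S (y, θ y)).2 ≤ κ * dist (S (x, θ x)).1 (S (y, θ y)).1 := by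
  have hθ₁ : LipschitzWith 1 θ := hθ.weaken hκ
  calc dist (S (x, θ x)).2 (S (y, θ y)).2
      ≤ b * dist (θ x) (θ y) + γ * dist x y := by
        simpa only [dist_prodMk_graph hθ₁] using hS.dist_snd_le (x, θ x) (y, θ y)
    _ ≤ b * (κ * dist x y) + γ * dist x y := by gcongr; exact hθ.dist_le_mul x y
    _ = (b * κ + γ) * dist x y := by ring
    _ ≤ κ * (a - γ) * dist x y := by gcongr
    _ = κ * ((a - γ) * dist x y) := by ring
    _ ≤ κ * dist (S (x, θ x)).1 (S (y, θ y)).1 := by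
        gcongr; exact hS.mul_dist_le_dist_fst_graph hθ₁ x y

theorem exists_isGraphTransform (hS : IsHyperbolicWith a b γ S) (hb : 0 ≤ b) (hκ : κ ≤ 1)
    (hcone : b * κ + γ ≤ κ * (a - γ)) (hθ : LipschitzWith κ θ) :
    ∃ φ, LipschitzWith κ φ ∧ IsGraphTransform S θ φ :=
  exists_lipschitzWith_comp_eq (hS.surjective_fst_graph θ (hθ.weaken hκ))
    (hS.dist_snd_graph_le hb hκ hcone hθ)

theorem dist_snd_apply_fst_le (hS : IsHyperbolicWith a b γ S) (hφ : LipschitzWith 1 φ)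
    (hθφ : IsGraphTransform S θ φ) (x : X) (y : Y) :
    dist (S (x, y)).2 (φ (S (x, y)).1) ≤ (b + 2 * γ) * dist y (θ x) := by
  have hvert : dist (S (x, y)).2 (S (x, θ x)).2 ≤ (b + γ) * dist y (θ x) := by
    simpa [add_mul] using hS.dist_snd_le (x, y) (x, θ x)
  have hhor : dist (φ (S (x, θ x)).1) (φ (S (x, y)).1) ≤ γ * dist y (θ x) := by
    rw [dist_comm]
    exact (by simpa using hφ.dist_le_mul (S (x, y)).1 (S (x, θ x)).1 :
      _ ≤ dist (S (x, y)).1 (S (x, θ x)).1).trans (hS.dist_fst_le x y (θ x))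
  calc dist (S (x, y)).2 (φ (S (x, y)).1)
      ≤ dist (S (x, y)).2 (S (x, θ x)).2 + dist (φ (S (x, θ x)).1) (φ (S (x, y)).1) := by
        rw [hθφ x]; exact dist_triangle _ _ _
    _ ≤ (b + γ) * dist y (θ x) + γ * dist y (θ x) := add_le_add hvert hhor
    _ = (b + 2 * γ) * dist y (θ x) := by ring

theorem dist_graphTransform_le (hS : IsHyperbolicWith a b γ S) (hb : 0 ≤ b) (hγ : 0 ≤ γ)
    (hγa : γ < a) (hfix : S (x₀, y₀) = (x₀, y₀)) (hφ : LipschitzWith 1 φ)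
    (hθφ : IsGraphTransform S θ φ) (hθ' : LipschitzWith 1 θ') (hθ'₀ : θ' x₀ = y₀)
    (hθφ' : IsGraphTransform S θ' φ') {C : ℝ} (hC : 0 ≤ C)
    (hdist : ∀ x, dist (θ' x) (θ x) ≤ C * dist x x₀) (ξ : X) :
    dist (φ' ξ) (φ ξ) ≤ C * ((b + 2 * γ) / (a - γ)) * dist ξ x₀ := by
  obtain ⟨x, rfl⟩ := hS.surjective_fst_graph θ' hθ' ξ
  have haγ : 0 < a - γ := sub_pos.2 hγa
  have hexp : dist x x₀ ≤ dist (S (x, θ' x)).1 x₀ / (a - γ) := by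
    rw [le_div_iff₀' haγ]
    simpa only [hθ'₀, hfix] using hS.mul_dist_le_dist_fst_graph hθ' x x₀
  calc dist (φ' (S (x, θ' x)).1) (φ (S (x, θ' x)).1)
      ≤ (b + 2 * γ) * dist (θ' x) (θ x) := by
        rw [hθφ' x]; exact hS.dist_snd_apply_fst_le hφ hθφ x (θ' x)
    _ ≤ (b + 2 * γ) * (C * dist x x₀) := by gcongr; exact hdist x
    _ ≤ (b + 2 * γ) * (C * (dist (S (x, θ' x)).1 x₀ / (a - γ))) := by gcongr
    _ = C * ((b + 2 * γ) / (a - γ)) * dist (S (x, θ' x)).1 x₀ := by ring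

theorem exists_seq_isGraphTransform (hS : IsHyperbolicWith a b γ S) (hb : 0 ≤ b) (hκ : κ ≤ 1)
    (hcone : b * κ + γ ≤ κ * (a - γ)) (hfix : S (x₀, y₀) = (x₀, y₀)) :
    ∃ θ : ℕ → X → Y, (∀ n, LipschitzWith κ (θ n)) ∧ (∀ n, θ n x₀ = y₀) ∧
      ∀ n, IsGraphTransform S (θ n) (θ (n + 1)) := by
  have step (θ : {θ : X → Y // LipschitzWith κ θ ∧ θ x₀ = y₀}) :
      ∃ φ : {φ : X → Y // LipschitzWith κ φ ∧ φ x₀ = y₀}, IsGraphTransform S θ.1 φ.1 := by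
    obtain ⟨φ, hφ, hθφ⟩ := hS.exists_isGraphTransform hb hκ hcone θ.2.1
    exact ⟨⟨φ, hφ, by simpa only [θ.2.2, hfix] using hθφ x₀⟩, hθφ⟩
  choose T hT using step
  let θ (n : ℕ) := T^[n] ⟨fun _ ↦ y₀, LipschitzWith.const' y₀, rfl⟩
  refine ⟨fun n ↦ (θ n).1, fun n ↦ (θ n).2.1, fun n ↦ (θ n).2.2, fun n ↦ ?_⟩
  simpa only [θ, iterate_succ_apply'] using hT (θ n)

theorem dist_seq_succ_le (hS : IsHyperbolicWith a b γ S) (hb : 0 ≤ b) (hγ : 0 ≤ γ)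
    (hγa : γ < a) (hfix : S (x₀, y₀) = (x₀, y₀)) {θ : ℕ → X → Y}
    (hθ : ∀ n, LipschitzWith 1 (θ n)) (hθ₀ : ∀ n, θ n x₀ = y₀)
    (hT : ∀ n, IsGraphTransform S (θ n) (θ (n + 1))) (n : ℕ) (x : X) :
    dist (θ (n + 1) x) (θ n x) ≤ 2 * ((b + 2 * γ) / (a - γ)) ^ n * dist x x₀ := by
  have hr : 0 ≤ (b + 2 * γ) / (a - γ) := div_nonneg (by positivity) (sub_pos.2 hγa).le
  induction n generalizing x with
  | zero =>
    have hdist (m : ℕ) : dist (θ m x) y₀ ≤ dist x x₀ := by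
      simpa [hθ₀ m] using (hθ m).dist_le_mul x x₀
    linarith [hdist 0, hdist 1, dist_triangle_right (θ 1 x) (θ 0 x) y₀]
  | succ n ih =>
    rw [pow_succ, ← mul_assoc]
    exact hS.dist_graphTransform_le hb hγ hγa hfix (hθ _) (hT n) (hθ _) (hθ₀ _) (hT _)
      (mul_nonneg zero_le_two (pow_nonneg hr n)) ih x

theorem isGraphTransform_of_tendsto (hS : IsHyperbolicWith a b γ S) {θ : ℕ → X → Y}
    {θlim : X → Y} (hθ : ∀ n, LipschitzWith 1 (θ n))
    (hT : ∀ n, IsGraphTransform S (θ n) (θ (n + 1)))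
    (hlim : ∀ x, Tendsto (fun n ↦ θ n x) atTop (𝓝 (θlim x))) :
    IsGraphTransform S θlim θlim := by
  intro x
  have hdist : Tendsto (fun n ↦ (b + 2 * γ) * dist (θlim x) (θ n x)) atTop (𝓝 0) := by
    simpa using ((tendsto_const_nhds (x := θlim x)).dist (hlim x)).const_mul (b + 2 * γ)
  have hsnd : Tendsto (fun n ↦ θ (n + 1) (S (x, θlim x)).1) atTop (𝓝 (S (x, θlim x)).2) := by
    rw [tendsto_iff_dist_tendsto_zero]
    refine squeeze_zero (fun _ ↦ dist_nonneg) (fun n ↦ ?_) hdist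
    rw [dist_comm]
    exact hS.dist_snd_apply_fst_le (hθ _) (hT n) x (θlim x)
  exact tendsto_nhds_unique ((hlim _).comp (tendsto_add_atTop_nat 1)) hsnd

theorem exists_isGraphTransform_self [CompleteSpace Y] (hS : IsHyperbolicWith a b γ S)
    (hb : 0 ≤ b) (hγ : 0 ≤ γ) (hgap : b + 3 * γ < a) (hκ : κ ≤ 1)
    (hcone : b * κ + γ ≤ κ * (a - γ)) (hfix : S (x₀, y₀) = (x₀, y₀)) :
    ∃ θ, LipschitzWith κ θ ∧ θ x₀ = y₀ ∧ IsGraphTransform S θ θ := by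
  have hγa : γ < a := by linarith
  have hr : (b + 2 * γ) / (a - γ) < 1 := (div_lt_one (sub_pos.2 hγa)).2 (by linarith)
  obtain ⟨θ, hθ, hθ₀, hT⟩ := hS.exists_seq_isGraphTransform hb hκ hcone hfix
  have hθ₁ (n : ℕ) : LipschitzWith 1 (θ n) := (hθ n).weaken hκ
  have hconv (x : X) : ∃ y, Tendsto (fun n ↦ θ n x) atTop (𝓝 y) := by
    refine cauchySeq_tendsto_of_complete
      (cauchySeq_of_le_geometric _ (2 * dist x x₀) hr fun n ↦ ?_)
    rw [dist_comm, mul_right_comm]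
    exact hS.dist_seq_succ_le hb hγ hγa hfix hθ₁ hθ₀ hT n x
  choose θlim hlim using hconv
  refine ⟨θlim, ?_, ?_, hS.isGraphTransform_of_tendsto hθ₁ hT hlim⟩
  · exact (isClosed_setOfPred_lipschitzWith κ).mem_of_tendsto (tendsto_pi_nhds.2 hlim)
      (.of_forall hθ)
  · exact tendsto_nhds_unique (hlim x₀) (by simp only [hθ₀, tendsto_const_nhds])

theorem exists_lipschitz_invariant_graph [CompleteSpace Y] (hS : IsHyperbolicWith a b γ S)
    (hb : 0 ≤ b) (hγ : 0 ≤ γ) (hgap : b + 3 * γ < a) (hfix : S (x₀, y₀) = (x₀, y₀)) :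
    ∃ θ : X → Y, (∀ x y, dist (θ x) (θ y) ≤ γ / (a - b - γ) * dist x y) ∧ LipschitzWith 1 θ ∧
      θ x₀ = y₀ ∧ IsGraphTransform S θ θ := by
  have hden : 0 < a - b - γ := by linarith
  obtain ⟨κ, hκ⟩ : ∃ κ : ℝ≥0, (κ : ℝ) = γ / (a - b - γ) :=
    ⟨⟨γ / (a - b - γ), div_nonneg hγ hden.le⟩, rfl⟩
  have hκ₁ : κ ≤ 1 := by
    rw [← NNReal.coe_le_coe, hκ, NNReal.coe_one, div_le_one hden]
    linarith
  -- The slope `γ / (a - b - γ)` is the smallest one allowed here: it gives equality.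
  have hcone : b * κ + γ ≤ κ * (a - γ) := by
    have hmul : κ * (a - b - γ) = γ := by rw [hκ, div_mul_cancel₀ _ hden.ne']
    linarith
  obtain ⟨θ, hθ, hθ₀, hinv⟩ := hS.exists_isGraphTransform_self hb hγ hgap hκ₁ hcone hfix
  exact ⟨θ, fun x y ↦ hκ ▸ hθ.dist_le_mul x y, hθ.weaken hκ₁, hθ₀, hinv⟩

theorem mul_dist_le_dist_of_mem_graph (hS : IsHyperbolicWith a b γ S) (hθ : LipschitzWith 1 θ)
    {p q : X × Y} (hp : p.2 = θ p.1) (hq : q.2 = θ q.1) :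
    (a - γ) * dist p q ≤ dist (S p) (S q) := by
  obtain ⟨x, _⟩ := p
  obtain ⟨y, _⟩ := q
  obtain rfl : _ = θ x := hp
  obtain rfl : _ = θ y := hq
  rw [dist_prodMk_graph hθ]
  exact (hS.mul_dist_le_dist_fst_graph hθ x y).trans (le_max_left _ _)

theorem bijOn_graph (hS : IsHyperbolicWith a b γ S) (hγa : γ < a) (hθ : LipschitzWith 1 θ)
    (hinv : IsGraphTransform S θ θ) :
    BijOn S {p | p.2 = θ p.1} {p | p.2 = θ p.1} := by
  refine ⟨?_, fun p hp q hq hpq ↦ ?_, ?_⟩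
  · rintro ⟨x, _⟩ (rfl : _ = θ x)
    exact (hinv x).symm
  · have h := hS.mul_dist_le_dist_of_mem_graph hθ hp hq
    rw [hpq, dist_self] at h
    exact dist_le_zero.1 (nonpos_of_mul_nonpos_right h (sub_pos.2 hγa))
  · rintro ⟨ξ, _⟩ (rfl : _ = θ ξ)
    obtain ⟨x, rfl⟩ := hS.surjective_fst_graph θ hθ ξ
    exact ⟨(x, θ x), rfl, Prod.ext rfl (hinv x).symm⟩

end IsHyperbolicWith

end GraphTransform

section NormedGroup

variable {X Y : Type*} [NormedAddCommGroup X] [NormedAddCommGroup Y]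

theorem isHyperbolicWith_prodMap_add [CompleteSpace X] {a b γ : ℝ≥0} (hγa : γ < a) {f : X → X}
    {g : Y → Y} {n : X × Y → X × Y} (hf : Surjective f) (hfa : AntilipschitzWith a⁻¹ f)
    (hg : LipschitzWith b g) (hn : LipschitzWith γ n) :
    IsHyperbolicWith a b γ (Prod.map f g + n) where
  mul_dist_fst_le p q := by
    have hexp : a * dist p.1 q.1 ≤ dist (f p.1) (f q.1) := by
      simpa using hfa.mul_le_dist p.1 q.1
    have hpert : dist (n p).1 (n q).1 ≤ γ * dist p q :=
      (le_max_left _ _).trans (hn.dist_le_mul p q)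
    have htri : dist (f p.1) (f q.1) ≤
        dist (f p.1 + (n p).1) (f q.1 + (n q).1) + dist (n p).1 (n q).1 := by
      simpa using dist_sub_sub_le (f p.1 + (n p).1) (n p).1 (f q.1 + (n q).1) (n q).1
    exact hexp.trans (htri.trans (by gcongr; rfl))
  dist_snd_le p q :=
    (dist_add_add_le _ _ _ _).trans <| add_le_add (hg.dist_le_mul _ _) <|
      (le_max_right _ _).trans (hn.dist_le_mul p q)
  dist_fst_le x y y' := by
    simpa using (le_max_left _ _).trans (hn.dist_le_mul (x, y) (x, y'))
  surjective_fst_graph θ hθ := by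
    have hgraph : LipschitzWith γ fun x ↦ (n (x, θ x)).1 := by
      simpa [comp_def] using
        LipschitzWith.prod_fst.comp (hn.comp (LipschitzWith.id.prodMk hθ))
    refine surjective_add_of_antilipschitzWith hf hfa hgraph ?_
    rwa [inv_mul_lt_iff₀ (pos_of_gt hγa), mul_one]

theorem stmt0_general [CompleteSpace X] [CompleteSpace Y]
    (a b ρ γ : ℝ) (hb : 0 ≤ b) (hγ : 0 ≤ γ) (h1 : b + 2 * γ < ρ) (h2 : ρ < a - 2 * γ)
    (Lu : X → X) (hLu : Surjective Lu) (hLua : ∀ x y, a * ‖x - y‖ ≤ ‖Lu x - Lu y‖)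
    (Ls : Y → Y) (hLs : ∀ x y, ‖Ls x - Ls y‖ ≤ b * ‖x - y‖)
    (N : X × Y → X × Y) (hNLip : ∀ x y, ‖N x - N y‖ ≤ γ * ‖x - y‖)
    (S : X × Y → X × Y) (hS : ∀ x, S x = (Lu x.1, Ls x.2) + N x) (hS0 : S 0 = 0) :
    ∃ θ : X → Y, θ 0 = 0 ∧
      (∀ ξ₁ ξ₂ : X, ‖θ ξ₁ - θ ξ₂‖ ≤ γ / (a - b - 3 * γ) * ‖ξ₁ - ξ₂‖) ∧
      γ / (a - b - 3 * γ) < 1 ∧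
      S '' {p : X × Y | p.2 = θ p.1} = {p : X × Y | p.2 = θ p.1} ∧
      (∀ x ∈ {p : X × Y | p.2 = θ p.1}, ∀ z ∈ {p : X × Y | p.2 = θ p.1},
        (a - 2 * γ) * ‖x - z‖ ≤ ‖S x - S z‖) ∧
      Set.BijOn S {p : X × Y | p.2 = θ p.1} {p : X × Y | p.2 = θ p.1} ∧
      (a - 2 * γ)⁻¹ < ρ⁻¹ := by
  have hγa : γ < a := by linarith
  have hden : 0 < a - b - 3 * γ := by linarith
  have hhyp : IsHyperbolicWith a b γ S := by
    lift a to ℝ≥0 using hγ.trans hγa.le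
    lift b to ℝ≥0 using hb
    lift γ to ℝ≥0 using hγ
    obtain rfl : S = Prod.map Lu Ls + N := funext hS
    refine isHyperbolicWith_prodMap_add (by exact_mod_cast hγa) hLu ?_ ?_ ?_
    · refine .of_le_mul_dist fun x y ↦ ?_
      rw [NNReal.coe_inv, le_inv_mul_iff₀ (γ.2.trans_lt hγa)]
      simpa only [dist_eq_norm] using hLua x y
    · exact .of_dist_le_mul fun x y ↦ by simpa only [dist_eq_norm] using hLs x y
    · exact .of_dist_le_mul fun x y ↦ by simpa only [dist_eq_norm] using hNLip x y
  obtain ⟨θ, hθ, hθ₁, hθ0, hinv⟩ :=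
    hhyp.exists_lipschitz_invariant_graph hb hγ (by linarith) hS0
  have hbij := hhyp.bijOn_graph hγa hθ₁ hinv
  refine ⟨θ, hθ0, fun x y ↦ ?_, (div_lt_one hden).2 (by linarith), hbij.image_eq,
    fun x hx z hz ↦ ?_, hbij, inv_strictAnti₀ (by linarith) h2⟩
  · have hslope : γ / (a - b - γ) ≤ γ / (a - b - 3 * γ) := by gcongr; linarith
    calc ‖θ x - θ y‖ ≤ γ / (a - b - γ) * ‖x - y‖ := by simpa only [dist_eq_norm] using hθ x y
      _ ≤ γ / (a - b - 3 * γ) * ‖x - y‖ := by gcongr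
  · have hexp := hhyp.mul_dist_le_dist_of_mem_graph hθ₁ hx hz
    rw [dist_eq_norm, dist_eq_norm] at hexp
    exact (by gcongr; linarith : _ ≤ (a - γ) * ‖x - z‖).trans hexp

end NormedGroup

/-- Global unstable manifold theorem: existence of the Lipschitz graph `W^u`. -/
theorem stmt0
    {Xu Xs : Type*} [NormedAddCommGroup Xu] [NormedSpace ℝ Xu] [CompleteSpace Xu]
    [NormedAddCommGroup Xs] [NormedSpace ℝ Xs] [CompleteSpace Xs]
    (a b ρ γ : ℝ) (hb : 0 < b) (hbρ : b < ρ) (hρa : ρ < a) (hγ : 0 < γ)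
    (h1 : b + 2 * γ < ρ) (h2 : ρ < a - 2 * γ)
    (Lu : Xu ≃L[ℝ] Xu) (hLu : ‖(Lu.symm : Xu →L[ℝ] Xu)‖ ≤ a⁻¹)
    (Ls : Xs →L[ℝ] Xs) (hLs : ‖Ls‖ ≤ b)
    (N : Xu × Xs → Xu × Xs) (hN0 : N 0 = 0)
    (hNLip : ∀ x y : Xu × Xs, ‖N x - N y‖ ≤ γ * ‖x - y‖)
    (S : Xu × Xs → Xu × Xs)
    (hS : ∀ x : Xu × Xs, S x = (Lu x.1, Ls x.2) + N x) :
    ∃ θ : Xu → Xs, θ 0 = 0 ∧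
      (∀ ξ₁ ξ₂ : Xu, ‖θ ξ₁ - θ ξ₂‖ ≤ γ / (a - b - 3 * γ) * ‖ξ₁ - ξ₂‖) ∧
      γ / (a - b - 3 * γ) < 1 ∧
      S '' {p : Xu × Xs | p.2 = θ p.1} = {p : Xu × Xs | p.2 = θ p.1} ∧
      (∀ x ∈ {p : Xu × Xs | p.2 = θ p.1}, ∀ z ∈ {p : Xu × Xs | p.2 = θ p.1},
        (a - 2 * γ) * ‖x - z‖ ≤ ‖S x - S z‖) ∧
      Set.BijOn S {p : Xu × Xs | p.2 = θ p.1} {p : Xu × Xs | p.2 = θ p.1} ∧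
      (a - 2 * γ)⁻¹ < ρ⁻¹ := by
  exact stmt0_general a b ρ γ hb.le hγ.le h1 h2 Lu Lu.surjective
    (mul_norm_sub_le_norm_map_sub (by linarith) hLu) Ls
    (fun x y ↦ by simpa using Ls.le_of_opNorm_le hLs (x - y)) N hNLip S hS (by simp [hS, hN0])
end

section
/- Let $X_u, X_s$ be Banach spaces and let $X = X_u \times X_s$ be equipped with the norm $\|(x_u,x_s)\| = \max\{\|x_u\|,\|x_s\|\}$. Let $L_u : X_u \to X_u$ be a bounded linear bijection with bounded inverse satisfying $\|L_u^{-1}\| \le a^{-1}$, let $L_s : X_s \to X_s$ be a bounded linear operator with $\|L_s\| \le b$, where $0 < b < \rho < a$, and let $\gamma > 0$ satisfy $b + 2\gamma < \rho < a - 2\gamma$. Let $N : X \to X$ be Lipschitz continuous with Lipschitz constant at most $\gamma$ and $N(0)=0$, and set $S = L + N$ where $L(x_u,x_s) = (L_u x_u, L_s x_s)$. Then there exists a map $\sigma : X_s \to X_u$ with $\sigma(0) = 0$ and Lipschitz constant strictly less than $1$, such that the set $W^s = \{(\sigma(\eta), \eta) : \eta \in X_s\}$ satisfies $S(W^s) \subseteq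 W^s$ and $\|S(x) - S(z)\| \le (b+2\gamma)\|x - z\|$ for all $x, z \in W^s$; in particular the restriction of $S$ to $W^s$ is Lipschitz with constant at most $b + 2\gamma < \rho$. -/
/-
Lyapunov-Perron method. The points over `η` whose `S`-orbit is `O(ρ ^ n)` are found by solving
`S` backwards in the unstable coordinate and forwards in the stable one: the unstable coordinates
`u n` of such an orbit are the `O(ρ ^ n)` fixed points of an operator which contracts the norm
`sup ‖u n‖ / ρ ^ n` by the factor `(ρ + γ) / a < 1`. Hence there is exactly one such point over
each `η`, and it depends on `η` with Lipschitz constant `(ρ + γ) / a`. The set of all these points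
is invariant because it is defined by a growth condition, and `ρ = b + γ` is an admissible rate.
-/

open Filter Function Topology

theorem exists_isFixedPt_of_weighted_contraction {ι E : Type*} [MetricSpace E] [CompleteSpace E]
    {T : (ι → E) → ι → E} {w : ι → ℝ} {k C : ℝ} {u₀ : ι → E} (hk₀ : 0 ≤ k) (hk₁ : k < 1)
    (hT : ∀ u v d, (∀ i, dist (u i) (v i) ≤ d * w i) → ∀ i, dist (T u i) (T v i) ≤ k * d * w i)
    (hu₀ : ∀ i, dist (u₀ i) (T u₀ i) ≤ C * w i) :
    ∃ u, IsFixedPt T u ∧ ∀ i, dist (u₀ i) (u i) ≤ C / (1 - k) * w i := by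
  have hstep (n : ℕ) : ∀ i, dist (T^[n] u₀ i) (T^[n + 1] u₀ i) ≤ C * w i * k ^ n := by
    induction n with
    | zero => simpa using hu₀
    | succ n ih =>
      intro i
      rw [iterate_succ_apply', iterate_succ_apply' T (n + 1)]
      refine (hT _ _ (C * k ^ n) (fun j => (ih j).trans_eq (by ring)) i).trans_eq (by ring)
  choose u hu using fun i => cauchySeq_tendsto_of_complete
    (cauchySeq_of_le_geometric k (C * w i) hk₁ fun n => hstep n i)
  have hdist (n : ℕ) (i : ι) : dist (T^[n] u₀ i) (u i) ≤ C / (1 - k) * k ^ n * w i :=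
    (dist_le_of_le_geometric_of_tendsto k _ hk₁ (fun m => hstep m i) (hu i) n).trans_eq (by ring)
  refine ⟨u, funext fun i => ?_, fun i => by simpa using hdist 0 i⟩
  have hTu : Tendsto (fun n => T^[n + 1] u₀ i) atTop (𝓝 (T u i)) := by
    have hpow : Tendsto (fun n : ℕ => k * (C / (1 - k) * k ^ n) * w i) atTop (𝓝 0) := by
      simpa using (((tendsto_pow_atTop_nhds_zero_of_lt_one hk₀ hk₁).const_mul
        (C / (1 - k))).const_mul k).mul_const (w i)
    refine tendsto_iff_dist_tendsto_zero.2 (squeeze_zero (fun _ => dist_nonneg) (fun n => ?_) hpow)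
    rw [iterate_succ_apply']
    exact hT _ _ _ (hdist n) i
  exact tendsto_nhds_unique hTu ((hu i).comp (tendsto_add_atTop_nat 1))

section LyapunovPerron

variable {E F : Type*}

/-- The stable coordinates generated by `S` from the initial value `η` when the unstable
coordinates are prescribed to be `u`. -/
def stableCoords (S : E × F → E × F) (η : F) (u : ℕ → E) : ℕ → F
  | 0 => η
  | n + 1 => (S (u n, stableCoords S η u n)).2

/-- The Lyapunov-Perron operator over `η`, for a backward solver `P` of the unstable coordinate
(see `IsPseudoHyperbolic`). Its fixed points are the sequences of unstable coordinates of the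
`S`-orbits that start over `η`. -/
def lyapunovPerron (S : E × F → E × F) (P : E → E × F → E) (η : F) (u : ℕ → E) (n : ℕ) : E :=
  P (u (n + 1)) (u n, stableCoords S η u n)

theorem stableCoords_fst_iterate (S : E × F → E × F) (x : E × F) (n : ℕ) :
    stableCoords S x.2 (fun m => (S^[m] x).1) n = (S^[n] x).2 := by
  induction n with
  | zero => rfl
  | succ n ih => rw [stableCoords, ih, iterate_succ_apply']

variable [NormedAddCommGroup E] [NormedAddCommGroup F]

/-- Pseudo-hyperbolicity of a map `S` of `E × F` fixing the origin, in the form used by the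
Lyapunov-Perron method: the second coordinate of `S` contracts at rate `b` up to an error `γ`,
and the first one expands at rate `a` up to an error `γ`. The expansion is expressed by a backward
solver `P`: the equation `(S x).1 = v` is equivalent to the implicit equation `P v x = x.1`. -/
structure IsPseudoHyperbolic (S : E × F → E × F) (P : E → E × F → E) (a b γ : ℝ) : Prop where
  map_zero : S 0 = 0
  solver_eq_iff : ∀ v x, P v x = x.1 ↔ (S x).1 = v
  norm_solver_sub_le : ∀ v w x z, a * ‖P v x - P w z‖ ≤ ‖v - w‖ + γ * ‖x - z‖
  norm_snd_sub_le : ∀ x z, ‖(S x).2 - (S z).2‖ ≤ b * ‖x.2 - z.2‖ + γ * ‖x - z‖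

/-- The pseudo-stable set of the origin at rate `ρ`: the points whose forward orbit is
`O(ρ ^ n)`. -/
def pseudoStableSet (S : E × F → E × F) (ρ : ℝ) : Set (E × F) :=
  {x | ∃ C, ∀ n, ‖S^[n] x‖ ≤ C * ρ ^ n}

theorem mapsTo_pseudoStableSet (S : E × F → E × F) (ρ : ℝ) :
    Set.MapsTo S (pseudoStableSet S ρ) (pseudoStableSet S ρ) := by
  rintro x ⟨C, hC⟩
  refine ⟨C * ρ, fun n => ?_⟩
  rw [← iterate_succ_apply]
  exact (hC (n + 1)).trans_eq (by ring)

namespace IsPseudoHyperbolic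

variable {S : E × F → E × F} {P : E → E × F → E} {a b γ ρ : ℝ}

theorem isFixedPt_fst_iterate (hS : IsPseudoHyperbolic S P a b γ) (x : E × F) :
    IsFixedPt (lyapunovPerron S P x.2) fun n => (S^[n] x).1 := by
  funext n
  rw [lyapunovPerron, stableCoords_fst_iterate, Prod.mk.eta, hS.solver_eq_iff,
    iterate_succ_apply']

theorem iterate_eq_of_isFixedPt (hS : IsPseudoHyperbolic S P a b γ) {η : F} {u : ℕ → E}
    (hu : IsFixedPt (lyapunovPerron S P η) u) (n : ℕ) :
    S^[n] (u 0, η) = (u n, stableCoords S η u n) := by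
  induction n with
  | zero => rfl
  | succ n ih =>
    rw [iterate_succ_apply', ih]
    exact Prod.ext ((hS.solver_eq_iff _ _).1 (congrFun hu n)) rfl

theorem stableCoords_zero (hS : IsPseudoHyperbolic S P a b γ) (n : ℕ) :
    stableCoords S 0 0 n = 0 := by
  induction n with
  | zero => rfl
  | succ n ih => rw [stableCoords, ih, Pi.zero_apply, Prod.mk_zero_zero, hS.map_zero, Prod.snd_zero]

theorem lyapunovPerron_zero (hS : IsPseudoHyperbolic S P a b γ) (n : ℕ) :
    lyapunovPerron S P 0 0 n = 0 := by
  rw [lyapunovPerron, hS.stableCoords_zero]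
  exact (hS.solver_eq_iff 0 0).2 (congrArg Prod.fst hS.map_zero)

section Estimates

variable {η ξ : F} {u v : ℕ → E} {d : ℝ}

theorem norm_stableCoords_sub_le (hS : IsPseudoHyperbolic S P a b γ) (hb : 0 ≤ b) (hγ : 0 ≤ γ)
    (hρ : b + γ ≤ ρ) (hηξ : ‖η - ξ‖ ≤ d) (huv : ∀ n, ‖u n - v n‖ ≤ d * ρ ^ n) (n : ℕ) :
    ‖stableCoords S η u n - stableCoords S ξ v n‖ ≤ d * ρ ^ n := by
  induction n with
  | zero => simpa [stableCoords] using hηξ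
  | succ n ih =>
    have hd : 0 ≤ d * ρ ^ n := (norm_nonneg _).trans ih
    calc ‖stableCoords S η u (n + 1) - stableCoords S ξ v (n + 1)‖
        ≤ b * ‖stableCoords S η u n - stableCoords S ξ v n‖
          + γ * ‖(u n, stableCoords S η u n) - (v n, stableCoords S ξ v n)‖ :=
          hS.norm_snd_sub_le _ _
      _ ≤ b * (d * ρ ^ n) + γ * (d * ρ ^ n) := by
          gcongr
          exact max_le (huv n) ih
      _ = (b + γ) * (d * ρ ^ n) := by ring
      _ ≤ ρ * (d * ρ ^ n) := by gcongr
      _ = d * ρ ^ (n + 1) := by ring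

theorem norm_lyapunovPerron_sub_le (hS : IsPseudoHyperbolic S P a b γ) (ha : 0 < a) (hb : 0 ≤ b)
    (hγ : 0 ≤ γ) (hρ : b + γ ≤ ρ) (hηξ : ‖η - ξ‖ ≤ d) (huv : ∀ n, ‖u n - v n‖ ≤ d * ρ ^ n)
    (n : ℕ) :
    ‖lyapunovPerron S P η u n - lyapunovPerron S P ξ v n‖ ≤ (ρ + γ) / a * d * ρ ^ n := by
  suffices a * ‖lyapunovPerron S P η u n - lyapunovPerron S P ξ v n‖ ≤ (ρ + γ) * d * ρ ^ n by
    rw [← le_div_iff₀' ha] at this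
    exact this.trans_eq (by ring)
  calc a * ‖lyapunovPerron S P η u n - lyapunovPerron S P ξ v n‖
      ≤ ‖u (n + 1) - v (n + 1)‖
        + γ * ‖(u n, stableCoords S η u n) - (v n, stableCoords S ξ v n)‖ :=
        hS.norm_solver_sub_le _ _ _ _
    _ ≤ d * ρ ^ (n + 1) + γ * (d * ρ ^ n) := by
        gcongr
        · exact huv (n + 1)
        · exact max_le (huv n) (hS.norm_stableCoords_sub_le hb hγ hρ hηξ huv n)
    _ = (ρ + γ) * d * ρ ^ n := by ring

theorem norm_fst_iterate_sub_le (hS : IsPseudoHyperbolic S P a b γ) (ha : 0 < a) (hb : 0 ≤ b)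
    (hγ : 0 ≤ γ) (hρ : b + γ ≤ ρ) {x z : E × F} (hxz : ‖x.2 - z.2‖ ≤ d)
    (h : ∀ n, ‖(S^[n] x).1 - (S^[n] z).1‖ ≤ d * ρ ^ n) (n : ℕ) :
    ‖(S^[n] x).1 - (S^[n] z).1‖ ≤ (ρ + γ) / a * d * ρ ^ n := by
  have := hS.norm_lyapunovPerron_sub_le ha hb hγ hρ hxz h n
  rwa [hS.isFixedPt_fst_iterate x, hS.isFixedPt_fst_iterate z] at this

end Estimates

theorem exists_mem_pseudoStableSet [CompleteSpace E] (hS : IsPseudoHyperbolic S P a b γ)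
    (hb : 0 ≤ b) (hγ : 0 ≤ γ) (hρ : b + γ ≤ ρ) (hρa : ρ + γ < a) (η : F) :
    ∃ u, (u, η) ∈ pseudoStableSet S ρ := by
  have ha : 0 < a := by linarith
  have hk₀ : 0 ≤ (ρ + γ) / a := div_nonneg (by linarith) ha.le
  have hk₁ : (ρ + γ) / a < 1 := (div_lt_one ha).2 hρa
  have hcontr (u v : ℕ → E) (d : ℝ) (huv : ∀ n, dist (u n) (v n) ≤ d * ρ ^ n) (n : ℕ) :
      dist (lyapunovPerron S P η u n) (lyapunovPerron S P η v n) ≤ (ρ + γ) / a * d * ρ ^ n := by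
    simp only [dist_eq_norm] at huv ⊢
    have hd : ‖η - η‖ ≤ d := by simpa using (norm_nonneg _).trans (huv 0)
    exact hS.norm_lyapunovPerron_sub_le ha hb hγ hρ hd huv n
  have hρ₀ : 0 ≤ ρ := by linarith
  have hzero (n : ℕ) :
      dist ((0 : ℕ → E) n) (lyapunovPerron S P η 0 n) ≤ (ρ + γ) / a * ‖η‖ * ρ ^ n := by
    rw [dist_comm, Pi.zero_apply, ← hS.lyapunovPerron_zero n, dist_eq_norm]
    refine hS.norm_lyapunovPerron_sub_le ha hb hγ hρ (by simp) (fun m => ?_) n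
    simpa using by positivity
  obtain ⟨u, hu, hu_le⟩ := exists_isFixedPt_of_weighted_contraction hk₀ hk₁ hcontr hzero
  set C := max ((ρ + γ) / a * ‖η‖ / (1 - (ρ + γ) / a)) ‖η‖
  have hu_le' (n : ℕ) : ‖u n - (0 : ℕ → E) n‖ ≤ C * ρ ^ n := by
    rw [← dist_eq_norm, dist_comm]
    exact (hu_le n).trans (by gcongr; exact le_max_left _ _)
  refine ⟨u 0, C, fun n => ?_⟩
  rw [hS.iterate_eq_of_isFixedPt hu]
  refine max_le (by simpa using hu_le' n) ?_
  have hη : ‖η - 0‖ ≤ C := (sub_zero η).symm ▸ le_max_right _ _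
  simpa [hS.stableCoords_zero] using hS.norm_stableCoords_sub_le hb hγ hρ hη hu_le' n

theorem norm_fst_sub_le_of_mem_pseudoStableSet (hS : IsPseudoHyperbolic S P a b γ) (hb : 0 ≤ b)
    (hγ : 0 ≤ γ) (hρ : b + γ ≤ ρ) (hρa : ρ + γ < a) {x z : E × F}
    (hx : x ∈ pseudoStableSet S ρ) (hz : z ∈ pseudoStableSet S ρ) :
    ‖x.1 - z.1‖ ≤ (ρ + γ) / a * ‖x.2 - z.2‖ := by
  obtain ⟨C, hC⟩ := hx
  obtain ⟨D, hD⟩ := hz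
  have ha : 0 < a := by linarith
  have hρ₀ : 0 ≤ ρ := by linarith
  set k := (ρ + γ) / a
  have hk₀ : 0 ≤ k := div_nonneg (by linarith) ha.le
  have hk₁ : k < 1 := (div_lt_one ha).2 hρa
  -- Each step shrinks the bound by `k`, until the distance of the initial values takes over.
  have hiter (j : ℕ) : ∀ n, ‖(S^[n] x).1 - (S^[n] z).1‖
      ≤ max (k ^ j * (C + D)) ‖x.2 - z.2‖ * ρ ^ n := by
    induction j with
    | zero =>
      intro n
      calc ‖(S^[n] x).1 - (S^[n] z).1‖ ≤ ‖S^[n] x - S^[n] z‖ := norm_fst_le (S^[n] x - S^[n] z)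
        _ ≤ ‖S^[n] x‖ + ‖S^[n] z‖ := norm_sub_le _ _
        _ ≤ C * ρ ^ n + D * ρ ^ n := add_le_add (hC n) (hD n)
        _ = (k ^ 0 * (C + D)) * ρ ^ n := by ring
        _ ≤ max (k ^ 0 * (C + D)) ‖x.2 - z.2‖ * ρ ^ n := by gcongr; exact le_max_left _ _
    | succ j ih =>
      intro n
      refine (hS.norm_fst_iterate_sub_le ha hb hγ hρ (le_max_right _ _) ih n).trans ?_
      gcongr
      rw [mul_max_of_nonneg _ _ hk₀, pow_succ', mul_assoc]
      exact max_le_max_left _ (mul_le_of_le_one_left (norm_nonneg _) hk₁.le)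
  have hlim (n : ℕ) : ‖(S^[n] x).1 - (S^[n] z).1‖ ≤ ‖x.2 - z.2‖ * ρ ^ n := by
    have hpow : Tendsto (fun j : ℕ => max (k ^ j * (C + D)) ‖x.2 - z.2‖ * ρ ^ n) atTop
        (𝓝 (‖x.2 - z.2‖ * ρ ^ n)) := by
      simpa using ((((tendsto_pow_atTop_nhds_zero_of_lt_one hk₀ hk₁).mul_const (C + D)).max
        (tendsto_const_nhds (x := ‖x.2 - z.2‖))).mul_const (ρ ^ n))
    exact ge_of_tendsto' hpow fun j => hiter j n
  simpa using hS.norm_fst_iterate_sub_le ha hb hγ hρ le_rfl hlim 0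

theorem norm_map_sub_le_of_mem_pseudoStableSet (hS : IsPseudoHyperbolic S P a b γ) (hb : 0 ≤ b)
    (hγ : 0 ≤ γ) (hρ : b + γ ≤ ρ) (hρa : ρ + γ < a) {x z : E × F}
    (hx : x ∈ pseudoStableSet S ρ) (hz : z ∈ pseudoStableSet S ρ) :
    ‖S x - S z‖ ≤ (b + γ) * ‖x - z‖ := by
  have ha : 0 < a := by linarith
  have hk₁ : (ρ + γ) / a ≤ 1 := ((div_lt_one ha).2 hρa).le
  have hsnd : ‖(S x).2 - (S z).2‖ ≤ (b + γ) * ‖x - z‖ :=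
    calc ‖(S x).2 - (S z).2‖ ≤ b * ‖x.2 - z.2‖ + γ * ‖x - z‖ := hS.norm_snd_sub_le x z
      _ ≤ b * ‖x - z‖ + γ * ‖x - z‖ := by gcongr; exact norm_snd_le (x - z)
      _ = (b + γ) * ‖x - z‖ := by ring
  have hfst : ‖(S x).1 - (S z).1‖ ≤ ‖(S x).2 - (S z).2‖ :=
    (hS.norm_fst_sub_le_of_mem_pseudoStableSet hb hγ hρ hρa (mapsTo_pseudoStableSet S ρ hx)
      (mapsTo_pseudoStableSet S ρ hz)).trans (mul_le_of_le_one_left (norm_nonneg _) hk₁)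
  exact max_le (hfst.trans hsnd) hsnd

theorem exists_pseudoStableSet_eq_graph [CompleteSpace E] (hS : IsPseudoHyperbolic S P a b γ)
    (hb : 0 ≤ b) (hγ : 0 ≤ γ) (hρ : b + γ ≤ ρ) (hρa : ρ + γ < a) :
    ∃ σ : F → E, pseudoStableSet S ρ = {p | p.1 = σ p.2} := by
  choose σ hσ using hS.exists_mem_pseudoStableSet hb hγ hρ hρa
  refine ⟨σ, Set.ext fun p => ⟨fun hp => ?_, fun hp => ?_⟩⟩
  · have := hS.norm_fst_sub_le_of_mem_pseudoStableSet hb hγ hρ hρa hp (hσ p.2)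
    rwa [sub_self, norm_zero, mul_zero, norm_le_zero_iff, sub_eq_zero] at this
  · have hp : p = (σ p.2, p.2) := Prod.ext hp rfl
    exact hp ▸ hσ p.2

theorem zero_mem_pseudoStableSet (hS : IsPseudoHyperbolic S P a b γ) :
    (0 : E × F) ∈ pseudoStableSet S ρ :=
  ⟨0, fun n => by simp [iterate_fixed hS.map_zero n]⟩

end IsPseudoHyperbolic

theorem isPseudoHyperbolic_linear_add_lipschitz [NormedSpace ℝ E] [NormedSpace ℝ F] {a b γ : ℝ}
    (ha : 0 < a) {Lu : E ≃L[ℝ] E} (hLu : ‖(Lu.symm : E →L[ℝ] E)‖ ≤ a⁻¹)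
    {Ls : F →L[ℝ] F} (hLs : ‖Ls‖ ≤ b) {N S : E × F → E × F} (hN₀ : N 0 = 0)
    (hN : ∀ x y, ‖N x - N y‖ ≤ γ * ‖x - y‖) (hS : ∀ x, S x = (Lu x.1, Ls x.2) + N x) :
    IsPseudoHyperbolic S (fun v x => Lu.symm (v - (N x).1)) a b γ where
  map_zero := by simp [hS, hN₀]
  solver_eq_iff v x := by
    rw [hS, Prod.fst_add, Lu.symm_apply_eq, sub_eq_iff_eq_add, eq_comm]
  norm_solver_sub_le v w x z := by
    rw [← map_sub, ← le_div_iff₀' ha, div_eq_inv_mul]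
    refine ((Lu.symm : E →L[ℝ] E).le_of_opNorm_le hLu _).trans ?_
    gcongr
    rw [sub_sub_sub_comm]
    exact (norm_sub_le _ _).trans
      (add_le_add_right ((norm_fst_le (N x - N z)).trans (hN x z)) _)
  norm_snd_sub_le x z := by
    rw [hS, hS, Prod.snd_add, Prod.snd_add, add_sub_add_comm, ← map_sub]
    exact norm_add_le_of_le (Ls.le_of_opNorm_le hLs _) ((norm_snd_le (N x - N z)).trans (hN x z))

end LyapunovPerron

theorem stmt1_general {Xu Xs : Type*} [NormedAddCommGroup Xu] [NormedSpace ℝ Xu] [CompleteSpace Xu]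
    [NormedAddCommGroup Xs] [NormedSpace ℝ Xs] (a b γ : ℝ) (hγ : 0 ≤ γ) (hgap : b + 2 * γ < a)
    (Lu : Xu ≃L[ℝ] Xu) (hLu : ‖(Lu.symm : Xu →L[ℝ] Xu)‖ ≤ a⁻¹)
    (Ls : Xs →L[ℝ] Xs) (hLs : ‖Ls‖ ≤ b)
    (N : Xu × Xs → Xu × Xs) (hN0 : N 0 = 0)
    (hNLip : ∀ x y : Xu × Xs, ‖N x - N y‖ ≤ γ * ‖x - y‖)
    (S : Xu × Xs → Xu × Xs)
    (hS : ∀ x : Xu × Xs, S x = (Lu x.1, Ls x.2) + N x) :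
    ∃ σ : Xs → Xu, σ 0 = 0 ∧
      (∃ cσ : ℝ, 0 ≤ cσ ∧ cσ < 1 ∧
        ∀ η₁ η₂ : Xs, ‖σ η₁ - σ η₂‖ ≤ cσ * ‖η₁ - η₂‖) ∧
      S '' {p : Xu × Xs | p.1 = σ p.2} ⊆ {p : Xu × Xs | p.1 = σ p.2} ∧
      ∀ x ∈ {p : Xu × Xs | p.1 = σ p.2}, ∀ z ∈ {p : Xu × Xs | p.1 = σ p.2},
        ‖S x - S z‖ ≤ (b + γ) * ‖x - z‖ := by
  have hb : 0 ≤ b := (norm_nonneg Ls).trans hLs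
  have ha : 0 < a := by linarith
  have hρa : b + γ + γ < a := by linarith
  have hyp := isPseudoHyperbolic_linear_add_lipschitz ha hLu hLs hN0 hNLip hS
  obtain ⟨σ, hσ⟩ := hyp.exists_pseudoStableSet_eq_graph hb hγ le_rfl hρa
  have hmem (η : Xs) : (σ η, η) ∈ pseudoStableSet S (b + γ) := hσ ▸ rfl
  have hzero : (0 : Xu × Xs) ∈ {p : Xu × Xs | p.1 = σ p.2} := hσ ▸ hyp.zero_mem_pseudoStableSet
  refine ⟨σ, hzero.symm, ⟨(b + γ + γ) / a, by positivity, (div_lt_one ha).2 hρa, fun η₁ η₂ =>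
    hyp.norm_fst_sub_le_of_mem_pseudoStableSet hb hγ le_rfl hρa (hmem η₁) (hmem η₂)⟩, ?_⟩
  rw [← hσ]
  exact ⟨(mapsTo_pseudoStableSet S _).image_subset, fun x hx z hz =>
    hyp.norm_map_sub_le_of_mem_pseudoStableSet hb hγ le_rfl hρa hx hz⟩

/-- Global stable manifold theorem: existence of the Lipschitz graph `W^s`. -/
theorem stmt1
    {Xu Xs : Type*} [NormedAddCommGroup Xu] [NormedSpace ℝ Xu] [CompleteSpace Xu]
    [NormedAddCommGroup Xs] [NormedSpace ℝ Xs] [CompleteSpace Xs]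
    (a b ρ γ : ℝ) (hb : 0 < b) (hbρ : b < ρ) (hρa : ρ < a) (hγ : 0 < γ)
    (h1 : b + 2 * γ < ρ) (h2 : ρ < a - 2 * γ)
    (Lu : Xu ≃L[ℝ] Xu) (hLu : ‖(Lu.symm : Xu →L[ℝ] Xu)‖ ≤ a⁻¹)
    (Ls : Xs →L[ℝ] Xs) (hLs : ‖Ls‖ ≤ b)
    (N : Xu × Xs → Xu × Xs) (hN0 : N 0 = 0)
    (hNLip : ∀ x y : Xu × Xs, ‖N x - N y‖ ≤ γ * ‖x - y‖)
    (S : Xu × Xs → Xu × Xs)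
    (hS : ∀ x : Xu × Xs, S x = (Lu x.1, Ls x.2) + N x) :
    ∃ σ : Xs → Xu, σ 0 = 0 ∧
      (∃ cσ : ℝ, 0 ≤ cσ ∧ cσ < 1 ∧
        ∀ η₁ η₂ : Xs, ‖σ η₁ - σ η₂‖ ≤ cσ * ‖η₁ - η₂‖) ∧
      S '' {p : Xu × Xs | p.1 = σ p.2} ⊆ {p : Xu × Xs | p.1 = σ p.2} ∧
      (∀ x ∈ {p : Xu × Xs | p.1 = σ p.2}, ∀ z ∈ {p : Xu × Xs | p.1 = σ p.2},
        ‖S x - S z‖ ≤ (b + 2 * γ) * ‖x - z‖) ∧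
      b + 2 * γ < ρ := by
  obtain ⟨σ, hσ₀, hσ, hinv, hcontr⟩ := stmt1_general a b γ hγ.le (by linarith) Lu hLu Ls hLs N
    hN0 hNLip S hS
  exact ⟨σ, hσ₀, hσ, hinv, fun x hx z hz => (hcontr x hx z hz).trans (by gcongr; linarith), h1⟩
end

section
/- Let $X_u, X_s$ be Banach spaces and let $X = X_u \times X_s$ be equipped with the norm $\|(x_u,x_s)\| = \max\{\|x_u\|,\|x_s\|\}$. Let $L_u : X_u \to X_u$ be a bounded linear bijection with bounded inverse satisfying $\|L_u^{-1}\| \le a^{-1}$, let $L_s : X_s \to X_s$ be a bounded linear operator with $\|L_s\| \le b$, where $0 < b < \rho < a$, and let $\gamma > 0$ satisfy $b + 2\gamma < \rho < a - 2\gamma$. Let $N : X \to X$ be Lipschitz continuous with Lipschitz constant at most $\gamma$ and $N(0)=0$, set $S = L + N$ where $L(x_u,x_s) = (L_u x_u, L_s x_s)$, and let $\theta : X_u \to X_s$ be a map with $\theta(0)=0$ and Lipschitz constant at most $1$ whose graph $W^u = \{(\xi,\theta(\xi)) : \xi \in X_u\}$ satisfies $S(W^u) = W^u$. Then a point $x \in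 X$ belongs to $W^u$ if and only if there exists a sequence $(x_j)_{j \le 0}$ in $X$ with $x_0 = x$, $S(x_j) = x_{j+1}$ for all $j < 0$, and $\sup_{j \le 0} \rho^{-j}\|x_j\| < \infty$. -/
/-!
Both implications come from one-sided estimates along a backward orbit. On the graph of `θ` the
map `S` expands the first coordinate by at least `ρ`, so pulling a point back inside the graph
makes it shrink like `ρ ^ (-n)`. Off the graph, `S` contracts the vertical distance `‖p.2 - θ p.1‖`
by a factor less than `ρ`: compare `p` with the point of the graph above `p.1`. A backward orbit
along which the vertical distance is `O(ρ ^ (-n))` must therefore start on the graph.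
-/

open Filter Set Topology
open scoped NNReal

section BackwardOrbit

variable {X : Type*} {S : X → X} {u : ℕ → X}

/-- `u` is a backward orbit of `S`, used to express the unstable manifold. The time index is
reversed: `u n` is the point reached at time `-n`. -/
def IsBackwardOrbit (S : X → X) (u : ℕ → X) : Prop :=
  ∀ n, S (u (n + 1)) = u n

theorem exists_isBackwardOrbit_of_surjOn {W : Set X} (hS : SurjOn S W W) {x : X} (hx : x ∈ W) :
    ∃ u : ℕ → X, u 0 = x ∧ IsBackwardOrbit S u ∧ ∀ n, u n ∈ W := by
  choose! g hgW hSg using hS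
  have hmem (n : ℕ) : g^[n] x ∈ W := MapsTo.iterate hgW n hx
  refine ⟨fun n ↦ g^[n] x, rfl, fun n ↦ ?_, hmem⟩
  simpa only [Function.iterate_succ_apply'] using hSg (hmem n)

namespace IsBackwardOrbit

theorem pow_mul_apply_le {W : Set X} {f : X → ℝ} {ρ : ℝ} (hu : IsBackwardOrbit S u)
    (huW : ∀ n, u n ∈ W) (hρ : 0 ≤ ρ) (hf : ∀ p ∈ W, ρ * f p ≤ f (S p)) (n : ℕ) :
    ρ ^ n * f (u n) ≤ f (u 0) := by
  have hanti : Antitone fun n ↦ ρ ^ n * f (u n) := antitone_nat_of_succ_le fun n ↦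
    calc ρ ^ (n + 1) * f (u (n + 1)) = ρ ^ n * (ρ * f (u (n + 1))) := by ring
      _ ≤ ρ ^ n * f (S (u (n + 1))) := by gcongr; exact hf _ (huW _)
      _ = ρ ^ n * f (u n) := by rw [hu n]
  simpa using hanti n.zero_le

theorem apply_zero_le_pow_mul {f : X → ℝ} {c : ℝ} (hu : IsBackwardOrbit S u) (hc : 0 ≤ c)
    (hf : ∀ p, f (S p) ≤ c * f p) (n : ℕ) : f (u 0) ≤ c ^ n * f (u n) := by
  have hmono : Monotone fun n ↦ c ^ n * f (u n) := monotone_nat_of_le_succ fun n ↦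
    calc c ^ n * f (u n) = c ^ n * f (S (u (n + 1))) := by rw [hu n]
      _ ≤ c ^ n * (c * f (u (n + 1))) := by gcongr; exact hf _
      _ = c ^ (n + 1) * f (u (n + 1)) := by ring
  simpa using hmono n.zero_le

theorem apply_zero_nonpos {f : X → ℝ} {c ρ C : ℝ} (hu : IsBackwardOrbit S u) (hc : 0 ≤ c)
    (hcρ : c < ρ) (hf : ∀ p, f (S p) ≤ c * f p) (hC : ∀ n, ρ ^ n * f (u n) ≤ C) :
    f (u 0) ≤ 0 := by
  have hρ : 0 < ρ := hc.trans_lt hcρ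
  have hbound (n : ℕ) : f (u 0) ≤ (c / ρ) ^ n * C :=
    calc f (u 0) ≤ c ^ n * f (u n) := hu.apply_zero_le_pow_mul hc hf n
      _ = (c / ρ) ^ n * (ρ ^ n * f (u n)) := by
        rw [← mul_assoc, ← mul_pow, div_mul_cancel₀ c hρ.ne']
      _ ≤ (c / ρ) ^ n * C := by gcongr; exact hC n
  have hlim : Tendsto (fun n : ℕ ↦ (c / ρ) ^ n * C) atTop (𝓝 0) := by
    simpa using (tendsto_pow_atTop_nhds_zero_of_lt_one (by positivity)
      ((div_lt_one hρ).2 hcρ)).mul_const C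
  exact ge_of_tendsto' hlim hbound

end IsBackwardOrbit

end BackwardOrbit

theorem dist_snd_graph_map_le {E F : Type*} [PseudoMetricSpace E] [PseudoMetricSpace F]
    {S : E × F → E × F} {θ : E → F} {α β κ : ℝ≥0}
    (hS : MapsTo S {p | p.2 = θ p.1} {p | p.2 = θ p.1})
    (hS₁ : ∀ x, LipschitzWith α fun y ↦ (S (x, y)).1)
    (hS₂ : ∀ x, LipschitzWith β fun y ↦ (S (x, y)).2)
    (hθ : LipschitzWith κ θ) (p : E × F) :
    dist (S p).2 (θ (S p).1) ≤ (β + κ * α) * dist p.2 (θ p.1) := by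
  obtain ⟨x, y⟩ := p
  have hgraph : (S (x, θ x)).2 = θ (S (x, θ x)).1 := hS rfl
  have hθS : dist (S (x, θ x)).2 (θ (S (x, y)).1) ≤ κ * (α * dist y (θ x)) :=
    calc dist (S (x, θ x)).2 (θ (S (x, y)).1)
        = dist (θ (S (x, y)).1) (θ (S (x, θ x)).1) := by rw [hgraph, dist_comm]
      _ ≤ κ * dist (S (x, y)).1 (S (x, θ x)).1 := hθ.dist_le_mul _ _
      _ ≤ κ * (α * dist y (θ x)) := by gcongr; exact (hS₁ x).dist_le_mul _ _
  calc dist (S (x, y)).2 (θ (S (x, y)).1)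
      ≤ dist (S (x, y)).2 (S (x, θ x)).2 + dist (S (x, θ x)).2 (θ (S (x, y)).1) :=
        dist_triangle _ _ _
    _ ≤ β * dist y (θ x) + κ * (α * dist y (θ x)) :=
        add_le_add ((hS₂ x).dist_le_mul _ _) hθS
    _ = (β + κ * α) * dist y (θ x) := by ring

section LipschitzPerturbation

variable {E F : Type*} [SeminormedAddCommGroup E] [SeminormedAddCommGroup F] {A : E → E}
  {B : F → F} {N : E × F → E × F} {θ : E → F} {γ κ : ℝ≥0}

theorem dist_snd_graph_le (hθ : LipschitzWith κ θ) (hθ0 : θ 0 = 0) (p : E × F) :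
    dist p.2 (θ p.1) ≤ (1 + κ) * ‖p‖ :=
  calc dist p.2 (θ p.1) ≤ ‖p.2‖ + ‖θ p.1‖ := dist_le_norm_add_norm _ _
    _ ≤ ‖p.2‖ + κ * ‖p.1‖ := by gcongr; exact hθ.norm_le_mul hθ0 _
    _ ≤ ‖p‖ + κ * ‖p‖ := by gcongr; exacts [norm_snd_le p, norm_fst_le p]
    _ = (1 + κ) * ‖p‖ := by ring

theorem norm_le_max_mul_norm_fst_of_mem_graph (hθ : LipschitzWith κ θ) (hθ0 : θ 0 = 0)
    {p : E × F} (hp : p.2 = θ p.1) : ‖p‖ ≤ max 1 κ * ‖p.1‖ := by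
  rw [Prod.norm_def, hp, NNReal.coe_max, NNReal.coe_one,
    max_mul_of_nonneg _ _ (norm_nonneg p.1), one_mul]
  exact max_le_max le_rfl (hθ.norm_le_mul hθ0 p.1)

theorem lipschitzWith_fst_prodMap_add (hN : LipschitzWith γ N) (x : E) :
    LipschitzWith γ fun y ↦ ((Prod.map A B + N) (x, y)).1 := by
  simpa using (LipschitzWith.const (A x)).add
    (LipschitzWith.prod_fst.comp (hN.comp (LipschitzWith.prodMk_left x)))

theorem lipschitzWith_snd_prodMap_add {b : ℝ≥0} (hB : LipschitzWith b B)
    (hN : LipschitzWith γ N) (x : E) :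
    LipschitzWith (b + γ) fun y ↦ ((Prod.map A B + N) (x, y)).2 := by
  simpa using hB.add (LipschitzWith.prod_snd.comp (hN.comp (LipschitzWith.prodMk_left x)))

theorem mul_norm_fst_le_norm_fst_prodMap_add {a m : ℝ} (hA : ∀ v, a * ‖v‖ ≤ ‖A v‖)
    (hN : LipschitzWith γ N) (hN0 : N 0 = 0) {p : E × F} (hp : ‖p‖ ≤ m * ‖p.1‖) :
    (a - γ * m) * ‖p.1‖ ≤ ‖((Prod.map A B + N) p).1‖ := by
  have hNp : ‖(N p).1‖ ≤ γ * (m * ‖p.1‖) :=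
    calc ‖(N p).1‖ ≤ ‖N p‖ := norm_fst_le _
      _ ≤ γ * ‖p‖ := hN.norm_le_mul hN0 p
      _ ≤ γ * (m * ‖p.1‖) := by gcongr
  calc (a - γ * m) * ‖p.1‖ = a * ‖p.1‖ - γ * (m * ‖p.1‖) := by ring
    _ ≤ ‖A p.1‖ - ‖(N p).1‖ := sub_le_sub (hA _) hNp
    _ ≤ ‖A p.1 + (N p).1‖ := norm_sub_le_norm_add _ _

theorem exists_isBackwardOrbit_of_mem_graph {a ρ : ℝ} (hA : ∀ v, a * ‖v‖ ≤ ‖A v‖)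
    (hN : LipschitzWith γ N) (hN0 : N 0 = 0) (hθ : LipschitzWith κ θ) (hθ0 : θ 0 = 0)
    (hρ : 0 ≤ ρ) (hρa : ρ ≤ a - γ * max 1 κ)
    (hS : SurjOn (Prod.map A B + N) {p | p.2 = θ p.1} {p | p.2 = θ p.1})
    {x : E × F} (hx : x.2 = θ x.1) :
    ∃ u : ℕ → E × F, u 0 = x ∧ IsBackwardOrbit (Prod.map A B + N) u ∧
      ∃ C : ℝ, ∀ n : ℕ, ρ ^ n * ‖u n‖ ≤ C := by
  obtain ⟨u, hu0, hu, huW⟩ := exists_isBackwardOrbit_of_surjOn hS hx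
  have hnorm (p : E × F) (hp : p.2 = θ p.1) : ‖p‖ ≤ max 1 κ * ‖p.1‖ :=
    norm_le_max_mul_norm_fst_of_mem_graph hθ hθ0 hp
  have hexpand : ∀ p ∈ {p : E × F | p.2 = θ p.1},
      ρ * ‖p.1‖ ≤ ‖((Prod.map A B + N) p).1‖ := fun p hp ↦
    (mul_le_mul_of_nonneg_right hρa (norm_nonneg _)).trans
      (mul_norm_fst_le_norm_fst_prodMap_add hA hN hN0 (hnorm p hp))
  have hdecay (n : ℕ) : ρ ^ n * ‖(u n).1‖ ≤ ‖(u 0).1‖ :=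
    hu.pow_mul_apply_le (f := fun p ↦ ‖p.1‖) huW hρ hexpand n
  refine ⟨u, hu0, hu, max 1 κ * ‖(u 0).1‖, fun n ↦ ?_⟩
  calc ρ ^ n * ‖u n‖ ≤ ρ ^ n * (max 1 κ * ‖(u n).1‖) := by gcongr; exact hnorm _ (huW n)
    _ = max 1 κ * (ρ ^ n * ‖(u n).1‖) := by ring
    _ ≤ max 1 κ * ‖(u 0).1‖ := by gcongr; exact hdecay n

end LipschitzPerturbation

theorem IsBackwardOrbit.mem_graph {E F : Type*} [SeminormedAddCommGroup E]
    [NormedAddCommGroup F] {A : E → E} {B : F → F} {N : E × F → E × F} {θ : E → F}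
    {b γ κ : ℝ≥0} {ρ C : ℝ} {u : ℕ → E × F} (hu : IsBackwardOrbit (Prod.map A B + N) u)
    (hB : LipschitzWith b B) (hN : LipschitzWith γ N) (hθ : LipschitzWith κ θ) (hθ0 : θ 0 = 0)
    (hbρ : b + γ * (1 + κ) < ρ)
    (hS : MapsTo (Prod.map A B + N) {p | p.2 = θ p.1} {p | p.2 = θ p.1})
    (hC : ∀ n, ρ ^ n * ‖u n‖ ≤ C) : (u 0).2 = θ (u 0).1 := by
  have hρ : 0 ≤ ρ := le_trans (by positivity) hbρ.le
  have hcontract (p : E × F) :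
      dist ((Prod.map A B + N) p).2 (θ ((Prod.map A B + N) p).1) ≤
        (b + γ * (1 + κ)) * dist p.2 (θ p.1) := by
    convert dist_snd_graph_map_le hS (lipschitzWith_fst_prodMap_add hN)
      (lipschitzWith_snd_prodMap_add hB hN) hθ p using 2
    push_cast
    ring
  have hbound (n : ℕ) : ρ ^ n * dist (u n).2 (θ (u n).1) ≤ (1 + κ) * C :=
    calc ρ ^ n * dist (u n).2 (θ (u n).1) ≤ ρ ^ n * ((1 + κ) * ‖u n‖) := by
          gcongr; exact dist_snd_graph_le hθ hθ0 _
      _ = (1 + κ) * (ρ ^ n * ‖u n‖) := by ring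
      _ ≤ (1 + κ) * C := by gcongr; exact hC n
  exact dist_le_zero.1 (hu.apply_zero_nonpos (f := fun p ↦ dist p.2 (θ p.1))
    (by positivity) hbρ hcontract hbound)

theorem mul_norm_le_norm_of_norm_symm_le {𝕜 E F : Type*} [NontriviallyNormedField 𝕜]
    [SeminormedAddCommGroup E] [NormedSpace 𝕜 E] [SeminormedAddCommGroup F] [NormedSpace 𝕜 F]
    {L : E ≃L[𝕜] F} {a : ℝ} (ha : 0 < a) (hL : ‖(L.symm : F →L[𝕜] E)‖ ≤ a⁻¹) (v : E) :
    a * ‖v‖ ≤ ‖L v‖ := by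
  have hv : ‖v‖ ≤ a⁻¹ * ‖L v‖ := by
    simpa using (L.symm : F →L[𝕜] E).le_of_opNorm_le hL (L v)
  exact (le_inv_mul_iff₀ ha).1 hv

theorem stmt2_general
    {E F : Type*} [SeminormedAddCommGroup E] [NormedAddCommGroup F]
    {A : E → E} {B : F → F} {N : E × F → E × F} {θ : E → F} {a ρ : ℝ} {b γ κ : ℝ≥0}
    (hA : ∀ v, a * ‖v‖ ≤ ‖A v‖) (hB : LipschitzWith b B)
    (hN : LipschitzWith γ N) (hN0 : N 0 = 0) (hθ : LipschitzWith κ θ) (hθ0 : θ 0 = 0)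
    (hbρ : b + γ * (1 + κ) < ρ) (hρa : ρ ≤ a - γ * max 1 κ)
    (hInv : (Prod.map A B + N) '' {p | p.2 = θ p.1} = {p | p.2 = θ p.1}) (x : E × F) :
    x ∈ {p : E × F | p.2 = θ p.1} ↔
      ∃ u : ℕ → E × F, u 0 = x ∧ IsBackwardOrbit (Prod.map A B + N) u ∧
        ∃ C : ℝ, ∀ n : ℕ, ρ ^ n * ‖u n‖ ≤ C := by
  have hρ : 0 ≤ ρ := le_trans (by positivity) hbρ.le
  constructor
  · intro hx
    exact exists_isBackwardOrbit_of_mem_graph hA hN hN0 hθ hθ0 hρ hρa hInv.ge hx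
  · rintro ⟨u, rfl, hu, C, hC⟩
    exact hu.mem_graph hB hN hθ hθ0 hbρ (image_subset_iff.1 hInv.le) hC

/-- Characterization of the global unstable manifold by backward orbits with
`‖x_j‖ = O(ρ^j)` as `j → -∞` (here indexed by `x_{-n} = u n`). -/
theorem stmt2
    {Xu Xs : Type*} [NormedAddCommGroup Xu] [NormedSpace ℝ Xu] [CompleteSpace Xu]
    [NormedAddCommGroup Xs] [NormedSpace ℝ Xs] [CompleteSpace Xs]
    (a b ρ γ : ℝ) (hb : 0 < b) (hbρ : b < ρ) (hρa : ρ < a) (hγ : 0 < γ)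
    (h1 : b + 2 * γ < ρ) (h2 : ρ < a - 2 * γ)
    (Lu : Xu ≃L[ℝ] Xu) (hLu : ‖(Lu.symm : Xu →L[ℝ] Xu)‖ ≤ a⁻¹)
    (Ls : Xs →L[ℝ] Xs) (hLs : ‖Ls‖ ≤ b)
    (N : Xu × Xs → Xu × Xs) (hN0 : N 0 = 0)
    (hNLip : ∀ x y : Xu × Xs, ‖N x - N y‖ ≤ γ * ‖x - y‖)
    (S : Xu × Xs → Xu × Xs)
    (hS : ∀ x : Xu × Xs, S x = (Lu x.1, Ls x.2) + N x)
    (θ : Xu → Xs) (hθ0 : θ 0 = 0)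
    (hθLip : ∀ ξ₁ ξ₂ : Xu, ‖θ ξ₁ - θ ξ₂‖ ≤ ‖ξ₁ - ξ₂‖)
    (hInv : S '' {p : Xu × Xs | p.2 = θ p.1} = {p : Xu × Xs | p.2 = θ p.1}) :
    ∀ x : Xu × Xs, x ∈ {p : Xu × Xs | p.2 = θ p.1} ↔
      ∃ u : ℕ → Xu × Xs, u 0 = x ∧ (∀ n : ℕ, S (u (n + 1)) = u n) ∧
        ∃ C : ℝ, ∀ n : ℕ, ρ ^ n * ‖u n‖ ≤ C := by
  lift b to ℝ≥0 using hb.le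
  lift γ to ℝ≥0 using hγ.le
  obtain rfl : S = Prod.map Lu Ls + N := funext hS
  exact stmt2_general (κ := 1) (mul_norm_le_norm_of_norm_symm_le (by linarith) hLu)
    (Ls.lipschitzWith_of_opNorm_le hLs)
    (LipschitzWith.of_dist_le_mul fun x y ↦ by simpa only [dist_eq_norm] using hNLip x y) hN0
    (LipschitzWith.of_dist_le_mul fun x y ↦ by simpa [dist_eq_norm] using hθLip x y) hθ0
    (by push_cast; linarith) (by rw [max_self, NNReal.coe_one]; linarith) hInv
end

section
/- Let $X_u, X_s$ be Banach spaces and let $X = X_u \times X_s$ be equipped with the norm $\|(x_u,x_s)\| = \max\{\|x_u\|,\|x_s\|\}$. Let $L_u : X_u \to X_u$ be a bounded linear bijection with bounded inverse satisfying $\|L_u^{-1}\| \le a^{-1}$, let $L_s : X_s \to X_s$ be a bounded linear operator with $\|L_s\| \le b$, where $0 < b < \rho < a$, and let $\gamma > 0$ satisfy $b + 2\gamma < \rho < a - 2\gamma$. Let $N : X \to X$ be Lipschitz continuous with Lipschitz constant at most $\gamma$ and $N(0)=0$, set $S = L + N$ where $L(x_u,x_s) = (L_u x_u, L_s x_s)$,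 and let $\sigma : X_s \to X_u$ be a map with $\sigma(0)=0$ and Lipschitz constant at most $1$ whose graph $W^s = \{(\sigma(\eta),\eta) : \eta \in X_s\}$ satisfies $S(W^s) \subseteq W^s$. Then a point $x \in X$ belongs to $W^s$ if and only if $\rho^{-n}\|S^n(x)\| \to 0$ as $n \to \infty$. -/
/-!
Let `S = Prod.map A B + N`, and let `σ` be `κ`-Lipschitz with an `S`-invariant graph. On the graph
the second coordinate dominates the norm and grows at most by the factor `b + γ max(κ, 1) < ρ` at
each step. Off the graph, comparing `S p` with the image of the point of the graph over `p.2` shows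
that the vertical distance `dist p.1 (σ p.2)` grows at least by the factor `K⁻¹ - γ (1 + κ) ≥ ρ`.
Since it is bounded by a multiple of the norm, `ρ⁻ⁿ ‖Sⁿ p‖ → 0` forces it to vanish at `p`.
-/

open Filter Function Set Topology
open scoped NNReal

section GeometricRates

variable {u : ℕ → ℝ} {c ρ : ℝ}

theorem tendsto_inv_pow_mul_of_succ_le_mul (hc : 0 ≤ c) (hcρ : c < ρ) (hu : ∀ n, 0 ≤ u n)
    (hsucc : ∀ n, u (n + 1) ≤ c * u n) :
    Tendsto (fun n ↦ (ρ ^ n)⁻¹ * u n) atTop (𝓝 0) := by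
  have hρ : 0 < ρ := hc.trans_lt hcρ
  have hgeom : Tendsto (fun n ↦ (c / ρ) ^ n * u 0) atTop (𝓝 0) := by
    simpa using (tendsto_pow_atTop_nhds_zero_of_lt_one (div_nonneg hc hρ.le)
      ((div_lt_one hρ).2 hcρ)).mul_const (u 0)
  refine squeeze_zero (fun n ↦ mul_nonneg (by positivity) (hu n)) (fun n ↦ ?_) hgeom
  calc (ρ ^ n)⁻¹ * u n ≤ (ρ ^ n)⁻¹ * (c ^ n * u 0) := by
        gcongr
        exact le_geom hc n fun k _ ↦ hsucc k
    _ = (c / ρ) ^ n * u 0 := by rw [div_pow]; ring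

theorem nonpos_of_mul_le_succ_of_tendsto (hρ : 0 < ρ) (hsucc : ∀ n, ρ * u n ≤ u (n + 1))
    (hlim : Tendsto (fun n ↦ (ρ ^ n)⁻¹ * u n) atTop (𝓝 0)) : u 0 ≤ 0 :=
  ge_of_tendsto' hlim fun n ↦
    (le_inv_mul_iff₀ (pow_pos hρ n)).2 (geom_le hρ.le n fun k _ ↦ hsucc k)

end GeometricRates

theorem dist_le_mul_dist_fst_of_snd_eq {X Y Z : Type*} [PseudoMetricSpace X] [PseudoMetricSpace Y]
    [PseudoMetricSpace Z] {C : ℝ≥0} {f : X × Y → Z} (hf : LipschitzWith C f) {p q : X × Y}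
    (hpq : p.2 = q.2) : dist (f p) (f q) ≤ C * dist p.1 q.1 := by
  simpa [Prod.dist_eq, hpq] using hf.dist_le_mul p q

/-- The graph of `σ : F → E` as a subset of `E × F`. The argument of `σ` is the second coordinate,
following the convention that the stable coordinate `x_s` comes last in `X = X_u × X_s`. -/
def sndGraph {E F : Type*} (σ : F → E) : Set (E × F) :=
  {p | p.1 = σ p.2}

/-- The distance in `E × F` from `p` to the point of `sndGraph σ` with the same second coordinate.
This, rather than the distance to the whole graph, is the quantity that expands under the map. -/
def verticalDist {E F : Type*} [Dist E] (σ : F → E) (p : E × F) : ℝ :=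
  dist p.1 (σ p.2)

section Graph

variable {E F : Type*} [SeminormedAddCommGroup E] [SeminormedAddCommGroup F]
  {A : E → E} {B : F → F} {N : E × F → E × F} {σ : F → E} {K b γ κ : ℝ≥0} {ρ : ℝ} {p : E × F}

theorem norm_le_mul_norm_snd_of_mem_sndGraph (hσ : LipschitzWith κ σ) (hσ0 : σ 0 = 0)
    (hp : p ∈ sndGraph σ) : ‖p‖ ≤ max κ 1 * ‖p.2‖ := by
  refine norm_prod_le_iff.2 ⟨?_, le_mul_of_one_le_left (norm_nonneg _) (le_max_right _ _)⟩
  calc ‖p.1‖ = ‖σ p.2‖ := by rw [show p.1 = σ p.2 from hp]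
    _ ≤ κ * ‖p.2‖ := hσ.norm_le_mul hσ0 _
    _ ≤ max κ 1 * ‖p.2‖ := by gcongr; exact le_max_left _ _

theorem norm_snd_map_le_of_mem_sndGraph (hB : ∀ s, ‖B s‖ ≤ b * ‖s‖) (hN : LipschitzWith γ N)
    (hN0 : N 0 = 0) (hσ : LipschitzWith κ σ) (hσ0 : σ 0 = 0) (hp : p ∈ sndGraph σ) :
    ‖((Prod.map A B + N) p).2‖ ≤ (b + γ * max κ 1) * ‖p.2‖ := by
  calc ‖B p.2 + (N p).2‖ ≤ ‖B p.2‖ + ‖(N p).2‖ := norm_add_le _ _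
    _ ≤ b * ‖p.2‖ + γ * ‖p‖ :=
        add_le_add (hB _) ((norm_snd_le _).trans (hN.norm_le_mul hN0 p))
    _ ≤ b * ‖p.2‖ + γ * (max κ 1 * ‖p.2‖) := by
        gcongr
        exact norm_le_mul_norm_snd_of_mem_sndGraph hσ hσ0 hp
    _ = (b + γ * max κ 1) * ‖p.2‖ := by ring

theorem tendsto_inv_pow_mul_norm_iterate_of_mem_sndGraph (hB : ∀ s, ‖B s‖ ≤ b * ‖s‖)
    (hN : LipschitzWith γ N) (hN0 : N 0 = 0) (hσ : LipschitzWith κ σ) (hσ0 : σ 0 = 0)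
    (hinv : MapsTo (Prod.map A B + N) (sndGraph σ) (sndGraph σ))
    (hρ : b + γ * max κ 1 < ρ) (hp : p ∈ sndGraph σ) :
    Tendsto (fun n ↦ (ρ ^ n)⁻¹ * ‖(Prod.map A B + N)^[n] p‖) atTop (𝓝 0) := by
  set S := Prod.map A B + N
  have hρ0 : 0 < ρ := lt_of_le_of_lt (by positivity) hρ
  have hmem (n : ℕ) : S^[n] p ∈ sndGraph σ := hinv.iterate n hp
  have hsnd : Tendsto (fun n ↦ (ρ ^ n)⁻¹ * ‖(S^[n] p).2‖) atTop (𝓝 0) := by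
    refine tendsto_inv_pow_mul_of_succ_le_mul (by positivity) hρ (fun n ↦ norm_nonneg _)
      fun n ↦ ?_
    rw [iterate_succ_apply']
    exact norm_snd_map_le_of_mem_sndGraph hB hN hN0 hσ hσ0 (hmem n)
  refine squeeze_zero (fun n ↦ by positivity) (fun n ↦ ?_)
    (by simpa using hsnd.const_mul ((max κ 1 : ℝ≥0) : ℝ))
  rw [mul_left_comm]
  gcongr
  exact norm_le_mul_norm_snd_of_mem_sndGraph hσ hσ0 (hmem n)

theorem dist_snd_map_le_of_snd_eq (hN : LipschitzWith γ N) {p q : E × F} (hpq : p.2 = q.2) :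
    dist ((Prod.map A B + N) p).2 ((Prod.map A B + N) q).2 ≤ γ * dist p.1 q.1 := by
  calc dist ((Prod.map A B + N) p).2 ((Prod.map A B + N) q).2
      = dist (N p).2 (N q).2 := by simp [hpq]
    _ ≤ γ * dist p.1 q.1 := (le_max_right _ _).trans (dist_le_mul_dist_fst_of_snd_eq hN hpq)

theorem mul_dist_fst_le_dist_fst_map_of_snd_eq (hA : AntilipschitzWith K A)
    (hN : LipschitzWith γ N) {p q : E × F} (hpq : p.2 = q.2) :
    ((K : ℝ)⁻¹ - γ) * dist p.1 q.1 ≤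
      dist ((Prod.map A B + N) p).1 ((Prod.map A B + N) q).1 := by
  have hNpq : dist (N p).1 (N q).1 ≤ γ * dist p.1 q.1 :=
    (le_max_left _ _).trans (dist_le_mul_dist_fst_of_snd_eq hN hpq)
  have hsum : dist (A p.1) (A q.1) ≤
      dist (A p.1 + (N p).1) (A q.1 + (N q).1) + dist (N p).1 (N q).1 := by
    simpa using dist_sub_sub_le (A p.1 + (N p).1) (N p).1 (A q.1 + (N q).1) (N q).1
  have hexp : (K : ℝ)⁻¹ * dist p.1 q.1 ≤ dist (A p.1) (A q.1) := hA.mul_le_dist p.1 q.1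
  calc ((K : ℝ)⁻¹ - γ) * dist p.1 q.1
      ≤ dist (A p.1 + (N p).1) (A q.1 + (N q).1) := by linarith
    _ = dist ((Prod.map A B + N) p).1 ((Prod.map A B + N) q).1 := rfl

theorem mul_verticalDist_le_verticalDist_map (hA : AntilipschitzWith K A)
    (hN : LipschitzWith γ N) (hσ : LipschitzWith κ σ)
    (hinv : MapsTo (Prod.map A B + N) (sndGraph σ) (sndGraph σ))
    (hρ : ρ + γ * (1 + κ) ≤ (K : ℝ)⁻¹) (p : E × F) :
    ρ * verticalDist σ p ≤ verticalDist σ ((Prod.map A B + N) p) := by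
  set S := Prod.map A B + N
  let q : E × F := (σ p.2, p.2)
  have hSq : (S q).1 = σ (S q).2 := hinv rfl
  have hfst : ((K : ℝ)⁻¹ - γ) * verticalDist σ p ≤ dist (S p).1 (S q).1 :=
    mul_dist_fst_le_dist_fst_map_of_snd_eq hA hN (q := q) rfl
  have hsnd : dist (S p).2 (S q).2 ≤ γ * verticalDist σ p :=
    dist_snd_map_le_of_snd_eq hN (q := q) rfl
  have hgraph : dist (S p).1 (S q).1 ≤
      verticalDist σ (S p) + κ * (γ * verticalDist σ p) := by
    calc dist (S p).1 (S q).1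
        ≤ dist (S p).1 (σ (S p).2) + dist (σ (S p).2) (σ (S q).2) := by
          rw [hSq]
          exact dist_triangle _ _ _
      _ ≤ verticalDist σ (S p) + κ * (γ * verticalDist σ p) :=
          add_le_add le_rfl (hσ.dist_le_mul_of_le hsnd)
  have hrate : (ρ + γ * (1 + κ)) * verticalDist σ p ≤ (K : ℝ)⁻¹ * verticalDist σ p :=
    mul_le_mul_of_nonneg_right hρ dist_nonneg
  linarith

theorem verticalDist_le_mul_norm (hσ : LipschitzWith κ σ) (hσ0 : σ 0 = 0) (p : E × F) :
    verticalDist σ p ≤ (1 + κ) * ‖p‖ := by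
  calc dist p.1 (σ p.2) ≤ ‖p.1‖ + ‖σ p.2‖ := dist_le_norm_add_norm _ _
    _ ≤ ‖p‖ + κ * ‖p‖ := by
        gcongr
        · exact norm_fst_le p
        · exact (hσ.norm_le_mul hσ0 _).trans (by gcongr; exact norm_snd_le p)
    _ = (1 + κ) * ‖p‖ := by ring

theorem verticalDist_eq_zero_of_tendsto (hA : AntilipschitzWith K A) (hN : LipschitzWith γ N)
    (hσ : LipschitzWith κ σ) (hσ0 : σ 0 = 0)
    (hinv : MapsTo (Prod.map A B + N) (sndGraph σ) (sndGraph σ)) (hρ0 : 0 < ρ)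
    (hρ : ρ + γ * (1 + κ) ≤ (K : ℝ)⁻¹)
    (hlim : Tendsto (fun n ↦ (ρ ^ n)⁻¹ * ‖(Prod.map A B + N)^[n] p‖) atTop (𝓝 0)) :
    verticalDist σ p = 0 := by
  set S := Prod.map A B + N
  have hdist : Tendsto (fun n ↦ (ρ ^ n)⁻¹ * verticalDist σ (S^[n] p)) atTop (𝓝 0) := by
    refine squeeze_zero (fun n ↦ mul_nonneg (by positivity) dist_nonneg) (fun n ↦ ?_)
      (by simpa using hlim.const_mul (1 + κ : ℝ))
    rw [mul_left_comm]
    gcongr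
    exact verticalDist_le_mul_norm hσ hσ0 _
  refine le_antisymm (nonpos_of_mul_le_succ_of_tendsto hρ0 (fun n ↦ ?_) hdist) dist_nonneg
  rw [iterate_succ_apply']
  exact mul_verticalDist_le_verticalDist_map hA hN hσ hinv hρ _

end Graph

theorem stmt3_general {E F : Type*} [NormedAddCommGroup E] [SeminormedAddCommGroup F]
    {K b γ κ : ℝ≥0} {ρ : ℝ} {A : E → E} {B : F → F} {N : E × F → E × F} {σ : F → E}
    (hA : AntilipschitzWith K A) (hB : ∀ s, ‖B s‖ ≤ b * ‖s‖)
    (hN : LipschitzWith γ N) (hN0 : N 0 = 0) (hσ : LipschitzWith κ σ) (hσ0 : σ 0 = 0)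
    (hinv : MapsTo (Prod.map A B + N) (sndGraph σ) (sndGraph σ))
    (hbρ : b + γ * max κ 1 < ρ) (hρK : ρ + γ * (1 + κ) ≤ (K : ℝ)⁻¹) (p : E × F) :
    p ∈ sndGraph σ ↔
      Tendsto (fun n ↦ (ρ ^ n)⁻¹ * ‖(Prod.map A B + N)^[n] p‖) atTop (𝓝 0) := by
  have hρ0 : 0 < ρ := lt_of_le_of_lt (by positivity) hbρ
  exact ⟨tendsto_inv_pow_mul_norm_iterate_of_mem_sndGraph hB hN hN0 hσ hσ0 hinv hbρ,
    fun hlim ↦ dist_eq_zero.1 (verticalDist_eq_zero_of_tendsto hA hN hσ hσ0 hinv hρ0 hρK hlim)⟩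

/-- Characterization of the global stable manifold: `x ∈ W^s` iff
`ρ⁻ⁿ ‖Sⁿ x‖ → 0` as `n → ∞`. -/
theorem stmt3
    {Xu Xs : Type*} [NormedAddCommGroup Xu] [NormedSpace ℝ Xu] [CompleteSpace Xu]
    [NormedAddCommGroup Xs] [NormedSpace ℝ Xs] [CompleteSpace Xs]
    (a b ρ γ : ℝ) (hb : 0 < b) (hbρ : b < ρ) (hρa : ρ < a) (hγ : 0 < γ)
    (h1 : b + 2 * γ < ρ) (h2 : ρ < a - 2 * γ)
    (Lu : Xu ≃L[ℝ] Xu) (hLu : ‖(Lu.symm : Xu →L[ℝ] Xu)‖ ≤ a⁻¹)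
    (Ls : Xs →L[ℝ] Xs) (hLs : ‖Ls‖ ≤ b)
    (N : Xu × Xs → Xu × Xs) (hN0 : N 0 = 0)
    (hNLip : ∀ x y : Xu × Xs, ‖N x - N y‖ ≤ γ * ‖x - y‖)
    (S : Xu × Xs → Xu × Xs)
    (hS : ∀ x : Xu × Xs, S x = (Lu x.1, Ls x.2) + N x)
    (σ : Xs → Xu) (hσ0 : σ 0 = 0)
    (hσLip : ∀ η₁ η₂ : Xs, ‖σ η₁ - σ η₂‖ ≤ ‖η₁ - η₂‖)
    (hInv : S '' {p : Xu × Xs | p.1 = σ p.2} ⊆ {p : Xu × Xs | p.1 = σ p.2}) :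
    ∀ x : Xu × Xs, x ∈ {p : Xu × Xs | p.1 = σ p.2} ↔
      Filter.Tendsto (fun n : ℕ => (ρ ^ n)⁻¹ * ‖S^[n] x‖)
        Filter.atTop (nhds 0) := by
  have ha : 0 < a := by linarith
  lift a to ℝ≥0 using ha.le
  lift b to ℝ≥0 using hb.le
  lift γ to ℝ≥0 using hγ.le
  obtain rfl : S = Prod.map Lu Ls + N := funext hS
  have hLu_anti : AntilipschitzWith a⁻¹ Lu :=
    (Lu.symm.lipschitz.weaken (mod_cast hLu)).to_rightInverse Lu.symm_apply_apply
  have hσ_lip : LipschitzWith 1 σ := lipschitzWith_iff_norm_sub_le.2 (by simpa using hσLip)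
  exact stmt3_general hLu_anti (Ls.le_of_opNorm_le hLs) (lipschitzWith_iff_norm_sub_le.2 hNLip)
    hN0 hσ_lip hσ0 (image_subset_iff.1 hInv) (by norm_num; linarith) (by norm_num; linarith)
end

section
/- Let $X_u, X_s$ be Banach spaces and let $X = X_u \times X_s$ be equipped with the norm $\|(x_u,x_s)\| = \max\{\|x_u\|,\|x_s\|\}$. Let $R > 0$ and let $B$ denote the closed ball of radius $R$ centered at $0$ in $X$. Let $a > 1$, $0 \le b < 1$, and let $S : X \to X$ be a map such that for every $x = (x_u, x_s) \in B$ one has $\|\pi_u S(x)\| \ge a \|x_u\|$ and $\|\pi_s S(x)\| \le b \|x_s\|$, where $\pi_u, \pi_s$ denote the projections onto $X_u$ and $X_s$. Then every global solution of $S$ contained in $B$, i.e. every function $\xi : \mathbb{Z} \to B$ with $S(\xi(m)) = \xi(m+1)$ for all $m \in \mathbb{Z}$, satisfies $\xi(m) = 0$ for all $m \in \mathbb{Z}$. -/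
/-!
If a real function is bounded above and each of its values is at most `c` times another of its
values, where `0 ≤ c < 1`, then its supremum `s` satisfies `s ≤ c * s`, so `s ≤ 0`. Along a bounded
global solution, the norm of the unstable component has this property looking forward in time, with
`c = a⁻¹`, and the norm of the stable component looking backward, with `c = b`. Only the latter uses
that the solution extends to all negative times.
-/

open Bornology Function Set

theorem nonpos_of_forall_exists_le_mul {ι : Type*} {u : ι → ℝ} {c : ℝ} (hc₀ : 0 ≤ c) (hc₁ : c < 1)
    (hbdd : BddAbove (range u)) (h : ∀ i, ∃ j, u i ≤ c * u j) (i : ι) : u i ≤ 0 := by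
  have : Nonempty ι := ⟨i⟩
  have hsup : ⨆ i, u i ≤ c * ⨆ i, u i := ciSup_le fun i ↦ by
    obtain ⟨j, hj⟩ := h i
    exact hj.trans (mul_le_mul_of_nonneg_left (le_ciSup hbdd j) hc₀)
  calc u i ≤ ⨆ i, u i := le_ciSup hbdd i
    _ ≤ 0 := by nlinarith only [hsup, hc₁]

section NormedAddGroup

variable {ι E : Type*} [NormedAddGroup E] {f : ι → E} {σ : ι → ι}

theorem eq_zero_of_forall_exists_norm_le_mul {c : ℝ} (hc₀ : 0 ≤ c) (hc₁ : c < 1)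
    (hf : IsBounded (range f)) (h : ∀ i, ∃ j, ‖f i‖ ≤ c * ‖f j‖) : f = 0 := by
  obtain ⟨C, hC⟩ := isBounded_iff_forall_norm_le.mp hf
  have hbdd : BddAbove (range fun i ↦ ‖f i‖) :=
    ⟨C, forall_mem_range.mpr fun i ↦ hC _ (mem_range_self i)⟩
  exact funext fun i ↦ norm_le_zero_iff.mp (nonpos_of_forall_exists_le_mul hc₀ hc₁ hbdd h i)

theorem eq_zero_of_mul_norm_le_norm_comp {a : ℝ} (ha : 1 < a) (hf : IsBounded (range f))
    (h : ∀ i, a * ‖f i‖ ≤ ‖f (σ i)‖) : f = 0 := by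
  have ha₀ : 0 < a := one_pos.trans ha
  exact eq_zero_of_forall_exists_norm_le_mul (inv_nonneg.mpr ha₀.le) (inv_lt_one_of_one_lt₀ ha) hf
    fun i ↦ ⟨σ i, (le_inv_mul_iff₀ ha₀).mpr (h i)⟩

theorem eq_zero_of_norm_comp_le_mul_norm {b : ℝ} (hb₀ : 0 ≤ b) (hb₁ : b < 1) (hσ : Surjective σ)
    (hf : IsBounded (range f)) (h : ∀ i, ‖f (σ i)‖ ≤ b * ‖f i‖) : f = 0 :=
  eq_zero_of_forall_exists_norm_le_mul hb₀ hb₁ hf <| hσ.forall.mpr fun i ↦ ⟨i, h i⟩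

end NormedAddGroup

/-- Any global solution of `S` that stays in the closed ball of radius `R`,
where `S` expands the unstable component and contracts the stable one,
must be identically zero. -/
theorem stmt5 {Xu Xs : Type*} [NormedAddCommGroup Xu] [NormedAddCommGroup Xs]
    (R a b : ℝ) (hR : 0 < R) (ha : 1 < a) (hb0 : 0 ≤ b) (hb : b < 1)
    (S : Xu × Xs → Xu × Xs)
    (hu : ∀ x : Xu × Xs, ‖x‖ ≤ R → a * ‖x.1‖ ≤ ‖(S x).1‖)
    (hs : ∀ x : Xu × Xs, ‖x‖ ≤ R → ‖(S x).2‖ ≤ b * ‖x.2‖)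
    (ξ : ℤ → Xu × Xs) (hξB : ∀ m : ℤ, ‖ξ m‖ ≤ R)
    (hξ : ∀ m : ℤ, S (ξ m) = ξ (m + 1)) :
    ∀ m : ℤ, ξ m = 0 := by
  have hbdd : IsBounded (range ξ) :=
    isBounded_iff_forall_norm_le.mpr ⟨R, forall_mem_range.mpr hξB⟩
  have hexpand (m : ℤ) : a * ‖(ξ m).1‖ ≤ ‖(ξ (m + 1)).1‖ := hξ m ▸ hu (ξ m) (hξB m)
  have hcontract (m : ℤ) : ‖(ξ (m + 1)).2‖ ≤ b * ‖(ξ m).2‖ := hξ m ▸ hs (ξ m) (hξB m)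
  have hfst : Prod.fst ∘ ξ = 0 :=
    eq_zero_of_mul_norm_le_norm_comp ha (range_comp Prod.fst ξ ▸ hbdd.image_fst) hexpand
  have hsnd : Prod.snd ∘ ξ = 0 :=
    eq_zero_of_norm_comp_le_mul_norm hb0 hb (add_right_surjective (1 : ℤ))
      (range_comp Prod.snd ξ ▸ hbdd.image_snd) hcontract
  exact fun m ↦ Prod.ext (congrFun hfst m) (congrFun hsnd m)
end

section
/- Let $X$ be a Banach space and $T : X \to X$ a continuous map which is asymptotically compact, i.e. whenever $n_k \to \infty$ in $\mathbb{N}$ and $(x_k)$ is a bounded sequence in $X$ such that $(T^{n_k}(x_k))$ is bounded, the sequence $(T^{n_k}(x_k))$ has a convergent subsequence. Let $x^* \in X$ be a fixed point of $T$ and let $\delta > 0$ be such that the only global solution $\xi : \mathbb{Z} \to X$ of $T$ with $\xi(m) \in B_\delta(x^*)$ for all $m \in \mathbb{Z}$ is the constant solution $\xi \equiv x^*$. Then every global solution $\xi : \mathbb{Z} \to X$ of $T$ satisfying $\xi(m) \in B_{\delta/2}(x^*)$ for all $m \ge 0$ converges to $x^*$, i.e. $\|\xi(m) - x^*\| \to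 0$ as $m \to \infty$. -/
/-!
Asymptotic compactness makes the ω-limit set of a bounded forward orbit attract the orbit and be
mapped by `T` onto itself. Hence every point of the ω-limit set lies on a global solution that never
leaves it. If the orbit stays in a closed set in which the constant `x₀` is the only global
solution, the ω-limit set is therefore contained in `{x₀}`, and the orbit converges to `x₀`.
-/

open Bornology Filter Function Set Topology
open scoped omegaLimit

section GlobalSolution

variable {X : Type*} {T : X → X}

/-- A global solution of `T` is a bi-infinite orbit of `T`, i.e. one indexed by `ℤ`. -/
def IsGlobalSolution (T : X → X) (ξ : ℤ → X) : Prop :=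
  ∀ m : ℤ, T (ξ m) = ξ (m + 1)

theorem IsGlobalSolution.iterate_apply {ξ : ℤ → X} (hξ : IsGlobalSolution T ξ) (m : ℤ) (n : ℕ) :
    T^[n] (ξ m) = ξ (m + n) := by
  induction n with
  | zero => simp
  | succ n ih => rw [iterate_succ_apply', ih, hξ, Nat.cast_succ, add_assoc]

theorem IsGlobalSolution.tendsto_atTop_iff {ξ : ℤ → X} (hξ : IsGlobalSolution T ξ) {l : Filter X} :
    Tendsto ξ atTop l ↔ Tendsto (fun n => T^[n] (ξ 0)) atTop l := by
  simp only [← Nat.map_cast_int_atTop, tendsto_map'_iff, comp_def, hξ.iterate_apply, zero_add]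

theorem exists_isGlobalSolution_of_surjOn {s : Set X} (hmaps : MapsTo T s s) (hsurj : SurjOn T s s)
    {z : X} (hz : z ∈ s) :
    ∃ ξ : ℤ → X, IsGlobalSolution T ξ ∧ (∀ m, ξ m ∈ s) ∧ ξ 0 = z := by
  choose! g hgs hTg using hsurj
  have hback (n : ℕ) : g^[n] z ∈ s := MapsTo.iterate hgs n hz
  refine ⟨fun
    | .ofNat n => T^[n] z
    | .negSucc n => g^[n + 1] z, ?_, ?_, rfl⟩
  · rintro (n | _ | n)
    · exact (iterate_succ_apply' T n z).symm
    · exact hTg hz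
    · exact (congrArg T (iterate_succ_apply' g (n + 1) z)).trans (hTg (hback (n + 1)))
  · rintro (n | n)
    · exact hmaps.iterate n hz
    · exact hback (n + 1)

end GlobalSolution

section AsymptoticallyCompact

variable {X : Type*} [TopologicalSpace X] {T : X → X} {x : X}

/-- Asymptotic compactness of `T`, the compactness property that replaces local compactness of the
phase space. Boundedness refers to the bornology of `X`, so that no metric is needed. -/
def IsAsymptoticallyCompact [Bornology X] (T : X → X) : Prop :=
  ∀ (n : ℕ → ℕ) (x : ℕ → X), Tendsto n atTop atTop →
    IsBounded (range x) → IsBounded (range fun k => T^[n k] (x k)) →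
    ∃ (φ : ℕ → ℕ) (z : X), StrictMono φ ∧ Tendsto (fun k => T^[n (φ k)] (x (φ k))) atTop (𝓝 z)

theorem mapsTo_omegaLimit_iterate (hT : Continuous T) (s : Set X) :
    MapsTo T (ω⁺ (fun n => T^[n]) s) (ω⁺ (fun n => T^[n]) s) :=
  (mapsTo_omegaLimit s (mapsTo_id s) (fun n x => (iterate_succ_apply' T n x).symm) hT).mono_right
    (omegaLimit_subset_of_tendsto _ s (tendsto_add_atTop_nat 1))

theorem mem_omegaLimit_of_tendsto {τ ι α : Type*} {f : Filter τ} {l : Filter ι} [l.NeBot]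
    {ϕ : τ → α → X} {a : α} {n : ι → τ} {z : X} (hn : Tendsto n l f)
    (hz : Tendsto (fun k => ϕ (n k) a) l (𝓝 z)) : z ∈ ω f ϕ {a} :=
  (mem_omegaLimit_singleton_iff_mapClusterPt _ _ _ _).2 (hz.mapClusterPt.of_comp hn)

namespace IsAsymptoticallyCompact

variable [Bornology X]

theorem exists_subseq_tendsto_omegaLimit (hac : IsAsymptoticallyCompact T)
    (hb : IsBounded (range fun n => T^[n] x)) {n : ℕ → ℕ} (hn : Tendsto n atTop atTop) :
    ∃ φ : ℕ → ℕ, StrictMono φ ∧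
      ∃ z ∈ ω⁺ (fun n => T^[n]) {x}, Tendsto (fun k => T^[n (φ k)] x) atTop (𝓝 z) := by
  have hx : IsBounded (range fun _ : ℕ => x) := by
    simp only [range_const, isBounded_singleton]
  obtain ⟨φ, z, hφ, hz⟩ := hac n (fun _ => x) hn hx
    (hb.subset (range_comp_subset_range n fun i => T^[i] x))
  exact ⟨φ, hφ, z, mem_omegaLimit_of_tendsto (hn.comp hφ.tendsto_atTop) hz, hz⟩

theorem surjOn_omegaLimit [FirstCountableTopology X] [T2Space X] (hac : IsAsymptoticallyCompact T)
    (hT : Continuous T) (hb : IsBounded (range fun n => T^[n] x)) :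
    SurjOn T (ω⁺ (fun n => T^[n]) {x}) (ω⁺ (fun n => T^[n]) {x}) := by
  intro z hz
  obtain ⟨n, hn, hnz⟩ :=
    ((mem_omegaLimit_singleton_iff_mapClusterPt _ _ _ _).1 hz).tendsto_subseq
  -- A preimage of `z` is a limit of the orbit along the times preceding those that lead to `z`.
  obtain ⟨φ, hφ, y, hy, hφy⟩ :=
    hac.exists_subseq_tendsto_omegaLimit hb ((tendsto_sub_atTop_nat 1).comp hn.tendsto_atTop)
  have hnφ : Tendsto (n ∘ φ) atTop atTop := (hn.comp hφ).tendsto_atTop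
  have hshift : ∀ᶠ k in atTop, T (T^[n (φ k) - 1] x) = T^[n (φ k)] x := by
    filter_upwards [hnφ.eventually_ge_atTop 1] with k (hk : 1 ≤ n (φ k))
    rw [← iterate_succ_apply' T, Nat.succ_eq_add_one, Nat.sub_add_cancel hk]
  have hTy : Tendsto (fun k => T^[n (φ k)] x) atTop (𝓝 (T y)) :=
    ((hT.tendsto y).comp hφy).congr' hshift
  exact ⟨y, hy, tendsto_nhds_unique hTy (hnz.comp hφ.tendsto_atTop)⟩

theorem tendsto_of_omegaLimit_subset (hac : IsAsymptoticallyCompact T)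
    (hb : IsBounded (range fun n => T^[n] x)) {x₀ : X}
    (hω : ω⁺ (fun n => T^[n]) {x} ⊆ {x₀}) :
    Tendsto (fun n => T^[n] x) atTop (𝓝 x₀) := by
  refine tendsto_of_subseq_tendsto fun n hn => ?_
  obtain ⟨φ, -, z, hz, hφz⟩ := hac.exists_subseq_tendsto_omegaLimit hb hn
  obtain rfl : z = x₀ := hω hz
  exact ⟨φ, hφz⟩

end IsAsymptoticallyCompact

theorem stmt6_general [Bornology X] [FirstCountableTopology X] [T2Space X] (hT : Continuous T)
    (hac : IsAsymptoticallyCompact T) {K : Set X} (hKc : IsClosed K) (hKb : IsBounded K) {x₀ : X}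
    (huniq : ∀ ξ : ℤ → X, IsGlobalSolution T ξ → (∀ m, ξ m ∈ K) → ∀ m, ξ m = x₀)
    (hx : ∀ n, T^[n] x ∈ K) :
    Tendsto (fun n => T^[n] x) atTop (𝓝 x₀) := by
  have hb : IsBounded (range fun n => T^[n] x) := hKb.subset (range_subset_iff.2 hx)
  have hωK : ω⁺ (fun n => T^[n]) {x} ⊆ K := fun z hz =>
    hKc.mem_of_mapClusterPt ((mem_omegaLimit_singleton_iff_mapClusterPt _ _ _ _).1 hz)
      (Eventually.of_forall hx)
  refine hac.tendsto_of_omegaLimit_subset hb fun z hz => ?_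
  obtain ⟨ξ, hξ, hξω, rfl⟩ := exists_isGlobalSolution_of_surjOn
    (mapsTo_omegaLimit_iterate hT {x}) (hac.surjOn_omegaLimit hT hb) hz
  exact huniq ξ hξ (fun m => hωK (hξω m)) 0

end AsymptoticallyCompact

theorem isAsymptoticallyCompact_iff_norm {X : Type*} [SeminormedAddGroup X] {T : X → X} :
    IsAsymptoticallyCompact T ↔ ∀ (n : ℕ → ℕ) (x : ℕ → X), Tendsto n atTop atTop →
      (∃ C : ℝ, ∀ k, ‖x k‖ ≤ C) → (∃ C : ℝ, ∀ k, ‖T^[n k] (x k)‖ ≤ C) →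
      ∃ (φ : ℕ → ℕ) (z : X), StrictMono φ ∧
        Tendsto (fun k => T^[n (φ k)] (x (φ k))) atTop (𝓝 z) := by
  simp only [IsAsymptoticallyCompact, isBounded_iff_forall_norm_le, forall_mem_range]

/-- Near an isolated fixed point of an asymptotically compact map, every
global solution remaining in the half-sized ball for nonnegative times
converges to the fixed point. -/
theorem stmt6 {X : Type*} [NormedAddCommGroup X] [NormedSpace ℝ X]
    (T : X → X) (hT : Continuous T)
    (hac : ∀ (n : ℕ → ℕ) (x : ℕ → X),
      Filter.Tendsto n Filter.atTop Filter.atTop →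
      (∃ C : ℝ, ∀ k, ‖x k‖ ≤ C) → (∃ C : ℝ, ∀ k, ‖T^[n k] (x k)‖ ≤ C) →
      ∃ (φ : ℕ → ℕ) (z : X), StrictMono φ ∧
        Filter.Tendsto (fun k => T^[n (φ k)] (x (φ k))) Filter.atTop (nhds z))
    (x₀ : X) (hx₀ : T x₀ = x₀) (δ : ℝ) (hδ : 0 < δ)
    (huniq : ∀ ξ : ℤ → X, (∀ m : ℤ, T (ξ m) = ξ (m + 1)) →
      (∀ m : ℤ, ‖ξ m - x₀‖ < δ) → ∀ m : ℤ, ξ m = x₀)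
    (ξ : ℤ → X) (hξ : ∀ m : ℤ, T (ξ m) = ξ (m + 1))
    (hξB : ∀ m : ℤ, 0 ≤ m → ‖ξ m - x₀‖ < δ / 2) :
    Filter.Tendsto ξ Filter.atTop (nhds x₀) := by
  have huniq' (η : ℤ → X) (hη : IsGlobalSolution T η)
      (hηB : ∀ m, η m ∈ Metric.closedBall x₀ (δ / 2)) : ∀ m, η m = x₀ :=
    huniq η hη fun m => (mem_closedBall_iff_norm.1 (hηB m)).trans_lt (half_lt_self hδ)
  have horbit (n : ℕ) : T^[n] (ξ 0) ∈ Metric.closedBall x₀ (δ / 2) := by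
    rw [IsGlobalSolution.iterate_apply hξ, zero_add, mem_closedBall_iff_norm]
    exact (hξB n n.cast_nonneg).le
  exact (IsGlobalSolution.tendsto_atTop_iff hξ).2 <| stmt6_general hT
    (isAsymptoticallyCompact_iff_norm.2 hac) Metric.isClosed_closedBall Metric.isBounded_closedBall
    huniq' horbit
end

section
/- Let $X$ be a Banach space, $L : X \to X$ a bounded linear operator such that $I - L$ is a bijection with bounded inverse, $U \subseteq X$ an open set containing $0$, and $N : U \to X$ a Lipschitz map with $N(0) = 0$ and Lipschitz constant at most $\gamma$; set $S = L + N$ on $U$. Let $\varepsilon > 0$ and $\delta_1 > 0$ be such that the closed ball $\overline{B_{\delta_1}(0)}$ is contained in $U$, $(\varepsilon + \gamma\delta_1)\|(I-L)^{-1}\| \le \delta_1$, and $(\varepsilon + \gamma)\|(I-L)^{-1}\| < 1$. If $S_1 : U \to X$ satisfies $\sup_{x \in U}\|S_1(x) - S(x)\| \le \varepsilon$ and $S_1 - S$ is Lipschitz on $U$ with Lipschitz constant at most $\varepsilon$, then $S_1$ has exactly one fixed point in $\overline{B_{\delta_1}(0)}$. -/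
/-! If `I - L` is invertible, then `S₁ x = x` is equivalent to `x = (I - L)⁻¹ (S₁ x - L x)`. The
map `S₁ - L = (S₁ - (L + N)) + N` has Lipschitz constant at most `ε + γ` and is bounded by
`ε + γ δ₁` on the ball, so the two smallness conditions say that `(I - L)⁻¹ ∘ (S₁ - L)` is a
contraction of the closed ball into itself, and Banach's fixed point theorem applies. -/

open Function Metric Set
open scoped NNReal

theorem existsUnique_mem_isFixedPt_of_lipschitzOnWith {α : Type*} [MetricSpace α] {K : ℝ≥0}
    {f : α → α} {s : Set α} (hs : IsComplete s) (hne : s.Nonempty) (hmaps : MapsTo f s s)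
    (hK : K < 1) (hf : LipschitzOnWith K f s) : ∃! x, x ∈ s ∧ IsFixedPt f x := by
  have hcontracting : ContractingWith K (hmaps.restrict f s s) := ⟨hK, hf.mapsToRestrict hmaps⟩
  obtain ⟨x₀, hx₀⟩ := hne
  obtain ⟨x, hxs, hx, -⟩ :=
    hcontracting.exists_fixedPoint' hs hmaps hx₀ (edist_ne_top x₀ (f x₀))
  refine ⟨x, ⟨hxs, hx⟩, fun y ⟨hys, hy⟩ => ?_⟩
  have hfix {z : α} (hzs : z ∈ s) (hz : IsFixedPt f z) :
      IsFixedPt (hmaps.restrict f s s) ⟨z, hzs⟩ := Subtype.ext hz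
  exact congrArg Subtype.val (hcontracting.fixedPoint_unique' (hfix hys hy) (hfix hxs hx))

/-- `f` is `ε`-Lipschitz close to `g` on `s`: both the supremum of `‖f - g‖` on `s` and the best
Lipschitz constant of `f - g` on `s` are at most `ε`. Each is expressed as an upper bound, which
avoids taking suprema and infima of possibly unbounded or empty sets of reals. -/
structure LipschitzCloseOn {α Y : Type*} [PseudoEMetricSpace α] [SeminormedAddCommGroup Y]
    (ε : ℝ≥0) (f g : α → Y) (s : Set α) : Prop where
  norm_sub_le : ∀ x ∈ s, ‖f x - g x‖ ≤ ε
  lipschitzOnWith_sub : LipschitzOnWith ε (f - g) s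

namespace LipschitzCloseOn

theorem mono {α Y : Type*} [PseudoEMetricSpace α] [SeminormedAddCommGroup Y] {ε : ℝ≥0}
    {f g : α → Y} {s t : Set α} (h : LipschitzCloseOn ε f g t) (hst : s ⊆ t) :
    LipschitzCloseOn ε f g s :=
  ⟨fun x hx => h.norm_sub_le x (hst hx), h.lipschitzOnWith_sub.mono hst⟩

theorem lipschitzOnWith_sub_left {α Y : Type*} [PseudoEMetricSpace α] [SeminormedAddCommGroup Y]
    {ε γ : ℝ≥0} {f g N : α → Y} {s : Set α} (h : LipschitzCloseOn ε f (g + N) s)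
    (hN : LipschitzOnWith γ N s) : LipschitzOnWith (ε + γ) (f - g) s := by
  have hsplit : f - g = fun x => (f - (g + N)) x + N x := by
    ext x
    simp only [Pi.sub_apply, Pi.add_apply]
    abel
  exact hsplit ▸ h.lipschitzOnWith_sub.add hN

theorem norm_sub_left_le {X Y : Type*} [SeminormedAddCommGroup X] [SeminormedAddCommGroup Y]
    {ε γ : ℝ≥0} {f g N : X → Y} {δ : ℝ} (h : LipschitzCloseOn ε f (g + N) (closedBall 0 δ))
    (hN : LipschitzOnWith γ N (closedBall 0 δ)) (hN0 : N 0 = 0) {x : X}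
    (hx : x ∈ closedBall 0 δ) : ‖f x - g x‖ ≤ ε + γ * δ := by
  have hxδ : ‖x‖ ≤ δ := mem_closedBall_zero_iff.1 hx
  have h0 : (0 : X) ∈ closedBall 0 δ := mem_closedBall_self ((norm_nonneg x).trans hxδ)
  calc ‖f x - g x‖ = ‖(f x - (g + N) x) + (N x - N 0)‖ := by
        rw [hN0, sub_zero, Pi.add_apply, sub_add_eq_sub_sub, sub_add_cancel]
    _ ≤ ‖f x - (g + N) x‖ + ‖N x - N 0‖ := norm_add_le _ _
    _ ≤ ε + γ * ‖x - 0‖ := add_le_add (h.norm_sub_le x hx) (hN.norm_sub_le hx h0)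
    _ ≤ ε + γ * δ := by rw [sub_zero]; gcongr

end LipschitzCloseOn

theorem existsUnique_mem_closedBall_isFixedPt_comp {X Y : Type*} [NormedAddCommGroup X]
    [CompleteSpace X] [SeminormedAddCommGroup Y] {R : Y → X} {G : X → Y} {K C : ℝ≥0} {M δ : ℝ}
    (hR : LipschitzWith K R) (hR0 : R 0 = 0) (hδ : 0 ≤ δ)
    (hG : LipschitzOnWith C G (closedBall 0 δ)) (hGM : ∀ x ∈ closedBall 0 δ, ‖G x‖ ≤ M)
    (hMK : M * K ≤ δ) (hCK : C * K < 1) :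
    ∃! x, x ∈ closedBall 0 δ ∧ IsFixedPt (R ∘ G) x := by
  have hmaps : MapsTo (R ∘ G) (closedBall 0 δ) (closedBall 0 δ) := fun x hx =>
    mem_closedBall_zero_iff.2 <| calc
      ‖R (G x)‖ ≤ K * ‖G x‖ := hR.norm_le_mul hR0 (G x)
      _ ≤ K * M := by gcongr; exact hGM x hx
      _ ≤ δ := mul_comm M K ▸ hMK
  exact existsUnique_mem_isFixedPt_of_lipschitzOnWith isClosed_closedBall.isComplete
    (nonempty_closedBall.2 hδ) hmaps (mul_comm C K ▸ hCK) (hR.comp_lipschitzOnWith hG)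

theorem isFixedPt_symm_comp_sub_iff {X : Type*} [AddGroup X] {E : X ≃ X} {L : X → X}
    (hE : ∀ x, E x = x - L x) {S : X → X} {x : X} :
    IsFixedPt (E.symm ∘ (S - L)) x ↔ IsFixedPt S x := by
  rw [IsFixedPt, comp_apply, Equiv.symm_apply_eq, hE, Pi.sub_apply, sub_left_inj, IsFixedPt]

theorem stmt7_general {X : Type*} [NormedAddCommGroup X] [CompleteSpace X]
    {L : X → X} (hL0 : L 0 = 0) {E : X ≃ X} (hE : ∀ x, E x = x - L x)
    {K : ℝ≥0} (hK : LipschitzWith K E.symm) {γ ε : ℝ≥0} {δ : ℝ} (hδ : 0 ≤ δ)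
    {N : X → X} (hN0 : N 0 = 0) (hN : LipschitzOnWith γ N (closedBall 0 δ))
    {S₁ : X → X} (hS₁ : LipschitzCloseOn ε S₁ (L + N) (closedBall 0 δ))
    (hsmall : (ε + γ * δ) * K ≤ δ) (hcontr : (ε + γ) * K < 1) :
    ∃! x, x ∈ closedBall 0 δ ∧ IsFixedPt S₁ x := by
  have hE0 : E.symm 0 = 0 := by rw [Equiv.symm_apply_eq, hE, hL0, sub_zero]
  simpa only [isFixedPt_symm_comp_sub_iff hE] using
    existsUnique_mem_closedBall_isFixedPt_comp hK hE0 hδ (hS₁.lipschitzOnWith_sub_left hN)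
      (fun _ => hS₁.norm_sub_left_le hN hN0) hsmall hcontr

/-- Permanence of fixed points under small Lipschitz perturbations:
`S₁` has exactly one fixed point in the closed ball of radius `δ₁`. -/
theorem stmt7 {X : Type*} [NormedAddCommGroup X] [NormedSpace ℝ X] [CompleteSpace X]
    (L : X →L[ℝ] X) (E : X ≃L[ℝ] X) (hE : ∀ x : X, E x = x - L x)
    (U : Set X) (hU : IsOpen U) (h0U : (0 : X) ∈ U)
    (γ ε δ₁ : ℝ) (hγ : 0 ≤ γ) (hε : 0 < ε) (hδ₁ : 0 < δ₁)
    (N : X → X) (hN0 : N 0 = 0)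
    (hNLip : ∀ x ∈ U, ∀ y ∈ U, ‖N x - N y‖ ≤ γ * ‖x - y‖)
    (hball : Metric.closedBall (0 : X) δ₁ ⊆ U)
    (hsmall : (ε + γ * δ₁) * ‖(E.symm : X →L[ℝ] X)‖ ≤ δ₁)
    (hcontr : (ε + γ) * ‖(E.symm : X →L[ℝ] X)‖ < 1)
    (S₁ : X → X)
    (hclose : ∀ x ∈ U, ‖S₁ x - (L x + N x)‖ ≤ ε)
    (hcloseLip : ∀ x ∈ U, ∀ y ∈ U,
      ‖(S₁ x - (L x + N x)) - (S₁ y - (L y + N y))‖ ≤ ε * ‖x - y‖) :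
    ∃! x : X, x ∈ Metric.closedBall (0 : X) δ₁ ∧ S₁ x = x := by
  lift γ to ℝ≥0 using hγ
  lift ε to ℝ≥0 using hε.le
  exact stmt7_general (E := E.toEquiv) (map_zero L) hE (E.symm : X →L[ℝ] X).lipschitz hδ₁.le hN0
    ((lipschitzOnWith_iff_norm_sub_le.2 hNLip).mono hball)
    (.mono ⟨hclose, lipschitzOnWith_iff_norm_sub_le.2 hcloseLip⟩ hball) hsmall hcontr
end

section
/- Let $X_1, X_2$ be Banach spaces, $r > 0$, $0 < c < 1$, and $z \in X_1 \times X_2$. Let $\theta, \tilde\theta : B_r^{X_1}(0) \to X_2$ and $\sigma, \tilde\sigma : B_r^{X_2}(0) \to X_1$ be maps with $\theta(0) = 0$, $\sigma(0) = 0$, $\mathrm{Lip}(\theta) \le c$, $\mathrm{Lip}(\sigma) \le c$, and suppose $\|\theta(y) - \tilde\theta(y)\| \le (1-c)r/2$ for all $y \in B_r^{X_1}(0)$ and $\|\sigma(x) - \tilde\sigma(x)\| \le (1-c)r/2$ for all $x \in B_r^{X_2}(0)$. If $\tilde\theta$ and $\tilde\sigma$ are Lipschitz with $\mathrm{Lip}(\tilde\theta)\cdot\mathrm{Lip}(\tilde\sigma)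 < 1$, then the sets $\tilde M = \{z + (y, \tilde\theta(y)) : y \in B_r^{X_1}(0)\}$ and $\tilde N = \{z + (\tilde\sigma(x), x) : x \in B_r^{X_2}(0)\}$ have nonempty intersection; moreover there is a unique $y_1$ in the closed ball of radius $r/2$ in $X_1$ with $\tilde\sigma(\tilde\theta(y_1)) = y_1$, and $z + (y_1, \tilde\theta(y_1)) \in \tilde M \cap \tilde N$. -/
/-!
Since `c * (r / 2) + (1 - c) * (r / 2) = r / 2`, each perturbed map sends the closed ball of radius
`r / 2` into the closed ball of the same radius. Hence `σ̃ ∘ θ̃` is a contraction of a complete set,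
and its fixed point is the first coordinate of a common point of the two graphs.
-/

open Function Metric Set
open scoped NNReal

theorem existsUnique_isFixedPt_of_lipschitzOnWith {α : Type*} [MetricSpace α] {s : Set α}
    {f : α → α} {K : ℝ≥0} (hK : K < 1) (hs : IsComplete s) (hne : s.Nonempty)
    (hmaps : MapsTo f s s) (hf : LipschitzOnWith K f s) : ∃! x, x ∈ s ∧ IsFixedPt f x := by
  have hcontr : ContractingWith K (hmaps.restrict f s s) := ⟨hK, hf.mapsToRestrict hmaps⟩
  obtain ⟨x₀, hx₀⟩ := hne
  obtain ⟨x, hx, hfix, -⟩ := hcontr.exists_fixedPoint' hs hmaps hx₀ (edist_ne_top _ _)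
  refine ⟨x, ⟨hx, hfix⟩, fun y ⟨hy, hfy⟩ => ?_⟩
  exact congrArg Subtype.val <| hcontr.fixedPoint_unique' (x := ⟨y, hy⟩) (y := ⟨x, hx⟩)
    (Subtype.ext hfy) (Subtype.ext hfix)

theorem existsUnique_isFixedPt_comp_of_lipschitzOnWith {α β : Type*} [MetricSpace α]
    [PseudoMetricSpace β] {s : Set α} {t : Set β} {f : α → β} {g : β → α} {Kf Kg : ℝ≥0}
    (hK : Kf * Kg < 1) (hs : IsComplete s) (hne : s.Nonempty) (hfst : MapsTo f s t)
    (hgts : MapsTo g t s) (hf : LipschitzOnWith Kf f s) (hg : LipschitzOnWith Kg g t) :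
    ∃! x, x ∈ s ∧ IsFixedPt (g ∘ f) x :=
  existsUnique_isFixedPt_of_lipschitzOnWith (mul_comm Kf Kg ▸ hK) hs hne (hgts.comp hfst)
    (hg.comp hf hfst)

theorem mapsTo_closedBall_zero_of_norm_sub_le {E F : Type*} [SeminormedAddCommGroup E]
    [SeminormedAddCommGroup F] {f g : E → F} {c s : ℝ} (hc : 0 ≤ c)
    (hf : ∀ x ∈ closedBall (0 : E) s, ‖f x‖ ≤ c * ‖x‖)
    (hfg : ∀ x ∈ closedBall (0 : E) s, ‖f x - g x‖ ≤ (1 - c) * s) :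
    MapsTo g (closedBall 0 s) (closedBall 0 s) := fun x hx => by
  have hxs : ‖x‖ ≤ s := mem_closedBall_zero_iff.1 hx
  refine mem_closedBall_zero_iff.2 ?_
  calc ‖g x‖ ≤ ‖f x‖ + ‖f x - g x‖ := norm_le_norm_add_norm_sub _ _
    _ ≤ c * ‖x‖ + (1 - c) * s := add_le_add (hf x hx) (hfg x hx)
    _ ≤ c * s + (1 - c) * s := by gcongr
    _ = s := by ring

theorem stmt9_general {X₁ X₂ : Type*} [NormedAddCommGroup X₁] [CompleteSpace X₁]
    [SeminormedAddCommGroup X₂] {r c : ℝ} (hr : 0 < r) (hc : 0 ≤ c) (z : X₁ × X₂)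
    {θ tθ : X₁ → X₂} {σ tσ : X₂ → X₁}
    (hθ : ∀ y ∈ ball (0 : X₁) r, ‖θ y‖ ≤ c * ‖y‖) (hσ : ∀ x ∈ ball (0 : X₂) r, ‖σ x‖ ≤ c * ‖x‖)
    (hθclose : ∀ y ∈ ball (0 : X₁) r, ‖θ y - tθ y‖ ≤ (1 - c) * r / 2)
    (hσclose : ∀ x ∈ ball (0 : X₂) r, ‖σ x - tσ x‖ ≤ (1 - c) * r / 2)
    {Kθ Kσ : ℝ≥0} (htθ : LipschitzOnWith Kθ tθ (ball 0 r)) (htσ : LipschitzOnWith Kσ tσ (ball 0 r))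
    (hK : Kθ * Kσ < 1) :
    ∃ y₁ : X₁, ‖y₁‖ ≤ r / 2 ∧ tσ (tθ y₁) = y₁ ∧
      z + (y₁, tθ y₁) ∈
        {p : X₁ × X₂ | ∃ y ∈ ball (0 : X₁) r, p = z + (y, tθ y)} ∩
        {p : X₁ × X₂ | ∃ x ∈ ball (0 : X₂) r, p = z + (tσ x, x)} ∧
      ∀ y' : X₁, ‖y'‖ ≤ r / 2 → tσ (tθ y') = y' → y' = y₁ := by
  have hsub₁ : closedBall (0 : X₁) (r / 2) ⊆ ball 0 r := closedBall_subset_ball (half_lt_self hr)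
  have hsub₂ : closedBall (0 : X₂) (r / 2) ⊆ ball 0 r := closedBall_subset_ball (half_lt_self hr)
  simp only [mul_div_assoc] at hθclose hσclose
  have hmapsθ : MapsTo tθ (closedBall 0 (r / 2)) (closedBall 0 (r / 2)) :=
    mapsTo_closedBall_zero_of_norm_sub_le hc (fun y hy => hθ y (hsub₁ hy))
      fun y hy => hθclose y (hsub₁ hy)
  have hmapsσ : MapsTo tσ (closedBall 0 (r / 2)) (closedBall 0 (r / 2)) :=
    mapsTo_closedBall_zero_of_norm_sub_le hc (fun x hx => hσ x (hsub₂ hx))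
      fun x hx => hσclose x (hsub₂ hx)
  obtain ⟨y₁, ⟨hy₁, hfix⟩, huniq⟩ := existsUnique_isFixedPt_comp_of_lipschitzOnWith hK
    isClosed_closedBall.isComplete (nonempty_closedBall.2 (half_pos hr).le) hmapsθ hmapsσ
    (htθ.mono hsub₁) (htσ.mono hsub₂)
  have hfix : tσ (tθ y₁) = y₁ := hfix
  refine ⟨y₁, mem_closedBall_zero_iff.1 hy₁, hfix, ⟨⟨y₁, hsub₁ hy₁, rfl⟩, ?_⟩, ?_⟩
  · exact ⟨tθ y₁, hsub₂ (hmapsθ hy₁), by rw [hfix]⟩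
  · exact fun y' hy' hfix' => huniq y' ⟨mem_closedBall_zero_iff.2 hy', hfix'⟩

/-- Persistence of transversal intersections (contraction case):
if `Lip(θ̃)·Lip(σ̃) < 1` the perturbed graphs intersect at a unique point
obtained as the fixed point of `σ̃ ∘ θ̃` in the ball of radius `r/2`. -/
theorem stmt9 {X₁ X₂ : Type*}
    [NormedAddCommGroup X₁] [NormedSpace ℝ X₁] [CompleteSpace X₁]
    [NormedAddCommGroup X₂] [NormedSpace ℝ X₂] [CompleteSpace X₂]
    (r c : ℝ) (hr : 0 < r) (hc0 : 0 < c) (hc1 : c < 1) (z : X₁ × X₂)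
    (θ tθ : X₁ → X₂) (σ tσ : X₂ → X₁)
    (hθ0 : θ 0 = 0) (hσ0 : σ 0 = 0)
    (hθLip : ∀ y₁ ∈ Metric.ball (0 : X₁) r, ∀ y₂ ∈ Metric.ball (0 : X₁) r,
      ‖θ y₁ - θ y₂‖ ≤ c * ‖y₁ - y₂‖)
    (hσLip : ∀ x₁ ∈ Metric.ball (0 : X₂) r, ∀ x₂ ∈ Metric.ball (0 : X₂) r,
      ‖σ x₁ - σ x₂‖ ≤ c * ‖x₁ - x₂‖)
    (hθclose : ∀ y ∈ Metric.ball (0 : X₁) r, ‖θ y - tθ y‖ ≤ (1 - c) * r / 2)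
    (hσclose : ∀ x ∈ Metric.ball (0 : X₂) r, ‖σ x - tσ x‖ ≤ (1 - c) * r / 2)
    (cθ cσ : ℝ) (hcθ : 0 ≤ cθ) (hcσ : 0 ≤ cσ)
    (htθLip : ∀ y₁ ∈ Metric.ball (0 : X₁) r, ∀ y₂ ∈ Metric.ball (0 : X₁) r,
      ‖tθ y₁ - tθ y₂‖ ≤ cθ * ‖y₁ - y₂‖)
    (htσLip : ∀ x₁ ∈ Metric.ball (0 : X₂) r, ∀ x₂ ∈ Metric.ball (0 : X₂) r,
      ‖tσ x₁ - tσ x₂‖ ≤ cσ * ‖x₁ - x₂‖)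
    (hprod : cθ * cσ < 1) :
    ∃ y₁ : X₁, ‖y₁‖ ≤ r / 2 ∧ tσ (tθ y₁) = y₁ ∧
      z + (y₁, tθ y₁) ∈
        {p : X₁ × X₂ | ∃ y ∈ Metric.ball (0 : X₁) r, p = z + (y, tθ y)} ∩
        {p : X₁ × X₂ | ∃ x ∈ Metric.ball (0 : X₂) r, p = z + (tσ x, x)} ∧
      ∀ y' : X₁, ‖y'‖ ≤ r / 2 → tσ (tθ y') = y' → y' = y₁ := by
  exact stmt9_general hr hc0.le z
    (fun y hy => by simpa only [hθ0, sub_zero] using hθLip y hy 0 (mem_ball_self hr))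
    (fun x hx => by simpa only [hσ0, sub_zero] using hσLip x hx 0 (mem_ball_self hr))
    hθclose hσclose (Kθ := ⟨cθ, hcθ⟩) (Kσ := ⟨cσ, hcσ⟩)
    (lipschitzOnWith_iff_norm_sub_le.2 fun y₁ h₁ y₂ h₂ => htθLip y₁ h₁ y₂ h₂)
    (lipschitzOnWith_iff_norm_sub_le.2 fun x₁ h₁ x₂ h₂ => htσLip x₁ h₁ x₂ h₂) hprod
end

section
/- Let $X_1$ be a finite-dimensional normed real vector space, $X_2$ a Banach space, $r > 0$, $0 < c < 1$, and $z \in X_1 \times X_2$. Let $\theta, \tilde\theta : B_r^{X_1}(0) \to X_2$ and $\sigma, \tilde\sigma : B_r^{X_2}(0) \to X_1$ be continuous maps with $\theta(0) = 0$, $\sigma(0) = 0$, $\mathrm{Lip}(\theta) \le c$, $\mathrm{Lip}(\sigma) \le c$, and suppose $\|\theta(y) - \tilde\theta(y)\| \le (1-c)r/2$ for all $y \in B_r^{X_1}(0)$ and $\|\sigma(x) - \tilde\sigma(x)\| \le (1-c)r/2$ for all $x \in B_r^{X_2}(0)$. Then the sets $\tilde M = \{z + (y, \tilde\theta(y)) :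 y \in B_r^{X_1}(0)\}$ and $\tilde N = \{z + (\tilde\sigma(x), x) : x \in B_r^{X_2}(0)\}$ have nonempty intersection. -/
/-!
Brouwer's theorem reduces to showing that `f = id + g` has a zero when `g` is `C¹` with compact
support. For small `t` the map `f_t = id + t g` is a bijection preserving `K = tsupport g`, so
`∫ x in K, det (f_t' x) * P (‖f_t x‖²) = ∫ y in K, P (‖y‖²)` for every polynomial `P`. The left side
is a polynomial in `t`, so equality persists up to `t = 1`, and Weierstrass approximation replaces
`P` by any continuous function. If `f` had no zero, a bump concentrated near `0` would make the left
side vanish and the right side positive.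

For the perturbed graphs, the linear growth of `θ` and `σ` gives `‖tθ y‖ ≤ c r / 2 + (1 - c) r / 2`
for `‖y‖ ≤ r / 2`, and likewise for `tσ`, so `tσ ∘ tθ` maps the closed ball of radius `r / 2` to
itself; a fixed point `y` gives the common point `(y, tθ y)`.
-/

open MeasureTheory Polynomial Filter Topology Function Set Metric

section PolynomialDependence

/-- Real functions given by a polynomial of degree at most `n`. The bound is part of the notion
because integrating a family of polynomials in a parameter (see `IsPolynomialOfDegreeLE.integral`)
needs one that is uniform over the family. -/
def IsPolynomialOfDegreeLE (n : ℕ) (f : ℝ → ℝ) : Prop :=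
  ∃ p : ℝ[X], p.natDegree ≤ n ∧ ∀ t, f t = p.eval t

namespace IsPolynomialOfDegreeLE

variable {m n : ℕ} {f g : ℝ → ℝ}

lemma mul (hf : IsPolynomialOfDegreeLE m f) (hg : IsPolynomialOfDegreeLE n g) :
    IsPolynomialOfDegreeLE (m + n) fun t ↦ f t * g t := by
  obtain ⟨p, hp, hpf⟩ := hf
  obtain ⟨q, hq, hqg⟩ := hg
  exact ⟨p * q, natDegree_mul_le_of_le hp hq, fun t ↦ by simp only [hpf, hqg, eval_mul]⟩

lemma eq_const_of_eventually_eq (hf : IsPolynomialOfDegreeLE n f) {a c : ℝ}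
    (h : ∀ᶠ t in 𝓝 a, f t = c) (t : ℝ) : f t = c := by
  obtain ⟨p, -, hpf⟩ := hf
  have heval : ∀ᶠ s in 𝓝 a, p.eval s = (C c).eval s := by simpa only [hpf, eval_C] using h
  rw [hpf, eq_of_infinite_eval_eq p (C c) (infinite_of_mem_nhds a heval), eval_C]

lemma eq_sum_lagrange (hf : IsPolynomialOfDegreeLE n f) (t : ℝ) :
    f t = ∑ i ∈ Finset.range (n + 1),
      f i * (Lagrange.basis (Finset.range (n + 1)) (fun i : ℕ ↦ (i : ℝ)) i).eval t := by
  obtain ⟨p, hp, hpf⟩ := hf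
  have hdeg : p.degree < (Finset.range (n + 1)).card := by
    rw [Finset.card_range]
    exact degree_le_natDegree.trans_lt (by exact_mod_cast Nat.lt_succ_of_le hp)
  have heval := congrArg (Polynomial.eval t) (Lagrange.eq_interpolate Nat.cast_injective.injOn hdeg)
  rw [hpf, heval, Lagrange.interpolate_apply, eval_finsetSum]
  exact Finset.sum_congr rfl fun i _ ↦ by rw [eval_mul, eval_C, hpf]

lemma integral {α : Type*} [MeasurableSpace α] {μ : Measure α} {F : ℝ → α → ℝ}
    (hF : ∀ x, IsPolynomialOfDegreeLE n (F · x)) (hint : ∀ t, Integrable (F t) μ) :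
    IsPolynomialOfDegreeLE n fun t ↦ ∫ x, F t x ∂μ := by
  let L := Lagrange.basis (Finset.range (n + 1)) fun i : ℕ ↦ (i : ℝ)
  refine ⟨∑ i ∈ Finset.range (n + 1), C (∫ x, F i x ∂μ) * L i, ?_, fun t ↦ ?_⟩
  · refine natDegree_sum_le_of_forall_le _ _ fun i hi ↦ (natDegree_C_mul_le _ _).trans ?_
    rw [Lagrange.natDegree_basis Nat.cast_injective.injOn hi, Finset.card_range,
      Nat.add_sub_cancel]
  · calc ∫ x, F t x ∂μ = ∫ x, ∑ i ∈ Finset.range (n + 1), F i x * (L i).eval t ∂μ := by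
          simp only [fun x ↦ (hF x).eq_sum_lagrange t, L]
      _ = ∑ i ∈ Finset.range (n + 1), (∫ x, F i x ∂μ) * (L i).eval t := by
          rw [integral_finsetSum _ fun (i : ℕ) _ ↦ (hint i).mul_const ((L i).eval t)]
          simp only [integral_mul_const]
      _ = (∑ i ∈ Finset.range (n + 1), C (∫ x, F i x ∂μ) * L i).eval t := by
          simp only [eval_finsetSum, eval_mul, eval_C]

end IsPolynomialOfDegreeLE

lemma isPolynomialOfDegreeLE_det_one_add_smul {E : Type*} [NormedAddCommGroup E] [NormedSpace ℝ E]
    [FiniteDimensional ℝ E] (A : E →L[ℝ] E) :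
    IsPolynomialOfDegreeLE (Module.finrank ℝ E) fun t ↦ (1 + t • A).det := by
  let b := Module.finBasis ℝ E
  let M := LinearMap.toMatrix b b (A : E →ₗ[ℝ] E)
  refine ⟨((X : ℝ[X]) • M.map C + (1 : Matrix _ _ ℝ).map C).det, ?_, fun t ↦ ?_⟩
  · simpa only [Fintype.card_fin] using natDegree_det_X_add_C_le M 1
  have hM : LinearMap.toMatrix b b ((1 + t • A : E →L[ℝ] E) : E →ₗ[ℝ] E) = 1 + t • M := by
    rw [ContinuousLinearMap.toLinearMap_add, ContinuousLinearMap.toLinearMap_smul, map_add,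
      map_smul, ContinuousLinearMap.toLinearMap_one, LinearMap.toMatrix_one]
  beta_reduce
  rw [ContinuousLinearMap.det, ← LinearMap.det_toMatrix b, hM, ← coe_evalRingHom, RingHom.map_det]
  congr 1
  ext i j
  simp only [RingHom.mapMatrix_apply, Matrix.map_apply, Matrix.add_apply, Matrix.smul_apply,
    smul_eq_mul, coe_evalRingHom, eval_add, eval_mul, eval_X, eval_C]
  ring

lemma isPolynomialOfDegreeLE_eval_norm_sq_add_smul {E : Type*} [NormedAddCommGroup E]
    [InnerProductSpace ℝ E] (P : ℝ[X]) (x v : E) :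
    IsPolynomialOfDegreeLE (P.natDegree * 2) fun t ↦ P.eval (‖x + t • v‖ ^ 2) := by
  refine ⟨P.comp (C (‖v‖ ^ 2) * X ^ 2 + C (2 * inner ℝ x v) * X + C (‖x‖ ^ 2)), ?_, fun t ↦ ?_⟩
  · exact natDegree_comp_le.trans (Nat.mul_le_mul_left _ natDegree_quadratic_le)
  · beta_reduce
    rw [eval_comp, norm_add_sq_real, norm_smul, inner_smul_right, mul_pow, Real.norm_eq_abs, sq_abs]
    simp only [eval_add, eval_mul, eval_pow, eval_C, eval_X]
    ring_nf

end PolynomialDependence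

section WeierstrassApproximation

variable {X : Type*} [TopologicalSpace X] [T2Space X] [MeasurableSpace X] [OpensMeasurableSpace X]
  {μ : Measure X} [IsFiniteMeasureOnCompacts μ] {K : Set X}

lemma exists_tendstoUniformlyOn_polynomial {a b : ℝ} {ψ : ℝ → ℝ} (hψ : ContinuousOn ψ (Icc a b)) :
    ∃ P : ℕ → ℝ[X], TendstoUniformlyOn (fun n s ↦ (P n).eval s) ψ atTop (Icc a b) := by
  choose P hP using fun n : ℕ ↦
    exists_polynomial_near_of_continuousOn a b ψ hψ (1 / (n + 1)) Nat.one_div_pos_of_nat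
  refine ⟨P, Metric.tendstoUniformlyOn_iff.mpr fun ε hε ↦ ?_⟩
  filter_upwards [(tendsto_one_div_add_atTop_nhds_zero_nat (𝕜 := ℝ)).eventually (gt_mem_nhds hε)]
    with n hn s hs
  rw [dist_comm, Real.dist_eq]
  exact (hP n s hs).trans hn

lemma tendsto_setIntegral_mul_comp (hK : IsCompact K) {F : ℕ → ℝ → ℝ} {ψ : ℝ → ℝ} {w u : X → ℝ}
    {S : Set ℝ} (hF : ∀ n, ContinuousOn (F n) S) (hψ : ContinuousOn ψ S)
    (hFψ : TendstoUniformlyOn F ψ atTop S) (hw : ContinuousOn w K) (hu : ContinuousOn u K)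
    (hKS : MapsTo u K S) :
    Tendsto (fun n ↦ ∫ x in K, w x * F n (u x) ∂μ) atTop (𝓝 (∫ x in K, w x * ψ (u x) ∂μ)) := by
  refine tendsto_integral_filter_of_dominated_convergence (fun x ↦ |w x| * (|ψ (u x)| + 1))
    (.of_forall fun n ↦ ?_) ?_ ?_ ?_
  · exact ((hw.mul ((hF n).comp hu hKS)).integrableOn_compact hK).aestronglyMeasurable
  · filter_upwards [Metric.tendstoUniformlyOn_iff.mp hFψ 1 one_pos] with n hn
    filter_upwards [ae_restrict_mem hK.measurableSet] with x hx
    have hclose : |ψ (u x) - F n (u x)| < 1 := hn _ (hKS hx)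
    rw [Real.norm_eq_abs, abs_mul]
    gcongr
    linarith [abs_sub_abs_le_abs_sub (F n (u x)) (ψ (u x)), abs_sub_comm (F n (u x)) (ψ (u x))]
  · exact (hw.abs.mul ((hψ.comp hu hKS).abs.add continuousOn_const)).integrableOn_compact hK
  · filter_upwards [ae_restrict_mem hK.measurableSet] with x hx
    exact (hFψ.tendsto_at (hKS hx)).const_mul _

lemma setIntegral_mul_comp_eq_of_forall_polynomial (hK : IsCompact K) {w₁ w₂ u₁ u₂ : X → ℝ}
    (hw₁ : ContinuousOn w₁ K) (hw₂ : ContinuousOn w₂ K)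
    (hu₁ : ContinuousOn u₁ K) (hu₂ : ContinuousOn u₂ K)
    (h : ∀ P : ℝ[X], ∫ x in K, w₁ x * P.eval (u₁ x) ∂μ = ∫ x in K, w₂ x * P.eval (u₂ x) ∂μ)
    {ψ : ℝ → ℝ} (hψ : Continuous ψ) :
    ∫ x in K, w₁ x * ψ (u₁ x) ∂μ = ∫ x in K, w₂ x * ψ (u₂ x) ∂μ := by
  obtain ⟨R₁, hR₁⟩ := hK.exists_bound_of_continuousOn hu₁
  obtain ⟨R₂, hR₂⟩ := hK.exists_bound_of_continuousOn hu₂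
  have hmaps₁ : MapsTo u₁ K (Icc (-max R₁ R₂) (max R₁ R₂)) := fun x hx ↦
    abs_le.mp ((hR₁ x hx).trans (le_max_left _ _))
  have hmaps₂ : MapsTo u₂ K (Icc (-max R₁ R₂) (max R₁ R₂)) := fun x hx ↦
    abs_le.mp ((hR₂ x hx).trans (le_max_right _ _))
  obtain ⟨P, hP⟩ := exists_tendstoUniformlyOn_polynomial
    (a := -max R₁ R₂) (b := max R₁ R₂) hψ.continuousOn
  have hPcont (n : ℕ) : ContinuousOn (fun s ↦ (P n).eval s) (Icc (-max R₁ R₂) (max R₁ R₂)) :=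
    (P n).continuous.continuousOn
  refine tendsto_nhds_unique
    (tendsto_setIntegral_mul_comp hK hPcont hψ.continuousOn hP hw₁ hu₁ hmaps₁) ?_
  simpa only [h] using tendsto_setIntegral_mul_comp hK hPcont hψ.continuousOn hP hw₂ hu₂ hmaps₂

end WeierstrassApproximation

section Perturbation

lemma bijective_id_add_of_lipschitzWith {E : Type*} [NormedAddCommGroup E] [NormedSpace ℝ E]
    [CompleteSpace E] {g : E → E} {κ : NNReal} (hg : LipschitzWith κ g) (hκ : κ < 1) :
    Bijective fun x ↦ x + g x := by
  have happrox : ApproximatesLinearOn (fun x ↦ x + g x)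
      (ContinuousLinearEquiv.refl ℝ E : E →L[ℝ] E) univ κ := fun x _ y _ ↦ by
    simpa [add_sub_add_comm] using hg.norm_sub_le x y
  have hsmall : Subsingleton E ∨
      κ < ‖((ContinuousLinearEquiv.refl ℝ E).symm : E →L[ℝ] E)‖₊⁻¹ := by
    rcases subsingleton_or_nontrivial E with hE | hE
    · exact .inl hE
    · right; simpa using hκ
  exact (happrox.toHomeomorph _ hsmall).bijective

lemma image_eq_of_eqOn_compl_id {α : Type*} {f : α → α} (hf : Bijective f) {s : Set α}
    (h : EqOn f id sᶜ) : f '' s = s := by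
  rw [← compl_inj_iff, ← image_compl_eq hf, h.image_eq, image_id]

variable {E : Type*} [NormedAddCommGroup E] [NormedSpace ℝ E] {g : E → E} {K : Set E}

lemma continuous_det_one_add_smul_fderiv (hg : ContDiff ℝ 1 g) :
    Continuous fun p : ℝ × E ↦ (1 + p.1 • fderiv ℝ g p.2).det :=
  ContinuousLinearMap.continuous_det.comp <| continuous_const.add <|
    continuous_fst.smul ((hg.continuous_fderiv one_ne_zero).comp continuous_snd)

lemma eventually_forall_det_one_add_smul_fderiv_pos (hg : ContDiff ℝ 1 g) (hK : IsCompact K) :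
    ∀ᶠ t in 𝓝 (0 : ℝ), ∀ x ∈ K, 0 < (1 + t • fderiv ℝ g x).det := by
  refine hK.eventually_forall_of_forall_eventually fun x _ ↦ ?_
  refine (continuous_det_one_add_smul_fderiv hg).continuousAt.eventually (lt_mem_nhds ?_)
  simp [ContinuousLinearMap.det]

variable [FiniteDimensional ℝ E]

lemma eventually_bijective_id_add_smul {κ : NNReal} (hg : LipschitzWith κ g) :
    ∀ᶠ t in 𝓝 (0 : ℝ), Bijective fun x ↦ x + t • g x := by
  have := FiniteDimensional.complete ℝ E
  have hcont : Continuous fun t : ℝ ↦ ‖t‖₊ * κ := by fun_prop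
  have hsmall : ∀ᶠ t in 𝓝 (0 : ℝ), ‖t‖₊ * κ < 1 :=
    hcont.continuousAt.eventually (gt_mem_nhds (by simp))
  filter_upwards [hsmall] with t ht
  exact bijective_id_add_of_lipschitzWith ((lipschitzWith_smul t).comp hg) ht

variable [MeasurableSpace E] [BorelSpace E] {μ : Measure E} [μ.IsAddHaarMeasure]

lemma eventually_setIntegral_det_mul_comp_id_add_smul (hg : ContDiff ℝ 1 g)
    (hK : IsCompact K) (hgK : support g ⊆ K) (φ : E → ℝ) :
    ∀ᶠ t in 𝓝 (0 : ℝ), ∫ x in K, (1 + t • fderiv ℝ g x).det * φ (x + t • g x) ∂μ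
      = ∫ x in K, φ x ∂μ := by
  obtain ⟨κ, hκ⟩ := hg.lipschitzWith_of_hasCompactSupport (hK.of_isClosed_subset
    (isClosed_tsupport g) (closure_minimal hgK hK.isClosed)) one_ne_zero
  filter_upwards [eventually_forall_det_one_add_smul_fderiv_pos hg hK,
    eventually_bijective_id_add_smul hκ] with t hdet hbij
  have himage : (fun x ↦ x + t • g x) '' K = K :=
    image_eq_of_eqOn_compl_id hbij fun x hx ↦ by
      simp [notMem_support.mp fun h ↦ hx (hgK h)]
  have hderiv (x : E) (_ : x ∈ K) :
      HasFDerivWithinAt (fun x ↦ x + t • g x) (1 + t • fderiv ℝ g x) K x :=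
    ((hasFDerivAt_id x).add
      ((hg.differentiable one_ne_zero x).hasFDerivAt.const_smul t)).hasFDerivWithinAt
  have hchange := integral_image_eq_integral_abs_det_fderiv_smul μ hK.measurableSet hderiv
    hbij.injective.injOn φ
  rw [himage] at hchange
  rw [hchange]
  refine setIntegral_congr_fun hK.measurableSet fun x hx ↦ ?_
  simp only [abs_of_pos (hdet x hx), smul_eq_mul]

lemma setIntegral_det_mul_comp_id_add_of_polynomial (hg : ContDiff ℝ 1 g) (hK : IsCompact K)
    (hgK : support g ⊆ K) {φ : E → ℝ} (hφ : Continuous φ) {n : ℕ}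
    (hpoly : ∀ x v, IsPolynomialOfDegreeLE n fun t ↦ φ (x + t • v)) :
    ∫ x in K, (1 + fderiv ℝ g x).det * φ (x + g x) ∂μ = ∫ x in K, φ x ∂μ := by
  have hcont (t : ℝ) : Continuous fun x ↦ (1 + t • fderiv ℝ g x).det * φ (x + t • g x) :=
    ((continuous_det_one_add_smul_fderiv hg).comp (continuous_const.prodMk continuous_id)).mul
      (hφ.comp (continuous_id.add (hg.continuous.const_smul t)))
  have hintegral : IsPolynomialOfDegreeLE (Module.finrank ℝ E + n) fun t ↦
      ∫ x in K, (1 + t • fderiv ℝ g x).det * φ (x + t • g x) ∂μ :=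
    .integral (fun x ↦ (isPolynomialOfDegreeLE_det_one_add_smul _).mul (hpoly x (g x)))
      fun t ↦ (hcont t).continuousOn.integrableOn_compact hK
  simpa only [one_smul] using hintegral.eq_const_of_eventually_eq
    (eventually_setIntegral_det_mul_comp_id_add_smul hg hK hgK φ) 1

end Perturbation

section Zeros

lemma setIntegral_det_mul_comp_norm_sq_id_add {E : Type*} [NormedAddCommGroup E]
    [InnerProductSpace ℝ E] [FiniteDimensional ℝ E] [MeasurableSpace E] [BorelSpace E]
    {μ : Measure E} [μ.IsAddHaarMeasure] {g : E → E} {K : Set E} (hg : ContDiff ℝ 1 g)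
    (hK : IsCompact K) (hgK : support g ⊆ K) {ψ : ℝ → ℝ} (hψ : Continuous ψ) :
    ∫ x in K, (1 + fderiv ℝ g x).det * ψ (‖x + g x‖ ^ 2) ∂μ = ∫ x in K, ψ (‖x‖ ^ 2) ∂μ := by
  have hdet : Continuous fun x ↦ (1 + fderiv ℝ g x).det := by
    simpa only [comp_def, id_eq, one_smul] using
      (continuous_det_one_add_smul_fderiv hg).comp (continuous_const (y := (1 : ℝ)).prodMk
        continuous_id)
  have hnorm_sq_add : Continuous fun x ↦ ‖x + g x‖ ^ 2 :=
    (continuous_id.add hg.continuous).norm.pow 2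
  have hnorm_sq : Continuous fun x : E ↦ ‖x‖ ^ 2 := by fun_prop
  have hpoly (P : ℝ[X]) : ∫ x in K, (1 + fderiv ℝ g x).det * P.eval (‖x + g x‖ ^ 2) ∂μ
      = ∫ x in K, 1 * P.eval (‖x‖ ^ 2) ∂μ := by
    simpa only [one_mul, comp_def] using setIntegral_det_mul_comp_id_add_of_polynomial hg hK hgK
      (P.continuous.comp hnorm_sq) (isPolynomialOfDegreeLE_eval_norm_sq_add_smul P)
  simpa only [one_mul] using setIntegral_mul_comp_eq_of_forall_polynomial hK hdet.continuousOn
    continuousOn_const hnorm_sq_add.continuousOn hnorm_sq.continuousOn hpoly hψ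

lemma exists_add_eq_zero_of_contDiff {E : Type*} [NormedAddCommGroup E] [InnerProductSpace ℝ E]
    [FiniteDimensional ℝ E] {g : E → E} (hg : ContDiff ℝ 1 g) (hgs : HasCompactSupport g) :
    ∃ x, x + g x = 0 := by
  by_contra! hne
  borelize E
  have hcont : Continuous fun x ↦ ‖x + g x‖ ^ 2 := (continuous_id.add hg.continuous).norm.pow 2
  obtain ⟨δ, hδ, hδle⟩ := hgs.isCompact.exists_forall_le' hcont.continuousOn (a := 0)
    fun x _ ↦ pow_pos (norm_pos_iff.mpr (hne x)) 2
  let ψ : ℝ → ℝ := fun s ↦ max (δ - s) 0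
  have hψ : Continuous ψ := by fun_prop
  have hzero : ∫ x in tsupport g, (1 + fderiv ℝ g x).det * ψ (‖x + g x‖ ^ 2) = 0 := by
    refine setIntegral_eq_zero_of_forall_eq_zero fun x hx ↦ ?_
    simp only [ψ, max_eq_right (sub_nonpos.mpr (hδle x hx)), mul_zero]
  have hpos : 0 < ∫ x in tsupport g, ψ (‖x‖ ^ 2) := by
    have hψcomp : Continuous fun x : E ↦ ψ (‖x‖ ^ 2) := hψ.comp (continuous_norm.pow 2)
    have hopen : IsOpen (support (fun x : E ↦ ψ (‖x‖ ^ 2)) ∩ support g) :=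
      hψcomp.isOpen_support.inter hg.continuous.isOpen_support
    have hmem : (0 : E) ∈ support (fun x : E ↦ ψ (‖x‖ ^ 2)) ∩ support g :=
      ⟨by simp [ψ, hδ.le, hδ.ne'], by simpa using hne 0⟩
    have hnonneg : 0 ≤ᵐ[volume.restrict (tsupport g)] fun x ↦ ψ (‖x‖ ^ 2) :=
      .of_forall fun x ↦ le_max_right _ _
    rw [setIntegral_pos_iff_support_of_nonneg_ae hnonneg
      (hψcomp.continuousOn.integrableOn_compact hgs.isCompact)]
    exact (hopen.measure_pos volume ⟨0, hmem⟩).trans_le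
      (measure_mono (inter_subset_inter_right _ (subset_tsupport g)))
  rw [← setIntegral_det_mul_comp_norm_sq_id_add hg hgs.isCompact (subset_tsupport g) hψ,
    hzero] at hpos
  exact hpos.false

lemma exists_add_eq_zero_of_continuous_inner {E : Type*} [NormedAddCommGroup E]
    [InnerProductSpace ℝ E] [FiniteDimensional ℝ E] {g : E → E} (hg : Continuous g)
    (hgs : HasCompactSupport g) : ∃ x, x + g x = 0 := by
  by_contra! hne
  obtain ⟨δ, hδ, hδle⟩ := hgs.isCompact.exists_forall_le'
    (continuous_id.add hg).norm.continuousOn (a := 0) fun x _ ↦ norm_pos_iff.mpr (hne x)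
  obtain ⟨g', hg', hclose, hsupp⟩ := hg.exists_contDiff_approx 1 (ε := fun _ ↦ δ)
    continuous_const fun _ ↦ hδ
  obtain ⟨x, hx⟩ := exists_add_eq_zero_of_contDiff hg' (hgs.mono hsupp)
  have hxg : x ∈ tsupport g := by
    apply subset_tsupport g
    by_cases hx' : x ∈ support g'
    · exact hsupp hx'
    · obtain rfl : x = 0 := by simpa [notMem_support.mp hx'] using hx
      simpa using hne 0
  have hdist : ‖x + g x‖ < δ := by
    have hrw : x + g x = g x - g' x := by
      rw [sub_eq_add_neg, ← eq_neg_of_add_eq_zero_left hx, add_comm]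
    simpa only [hrw, dist_eq_norm'] using hclose x
  exact (hδle x hxg).not_gt hdist

variable {E : Type*} [NormedAddCommGroup E] [NormedSpace ℝ E] [FiniteDimensional ℝ E]

lemma exists_add_eq_zero_of_continuous {g : E → E} (hg : Continuous g)
    (hgs : HasCompactSupport g) : ∃ x, x + g x = 0 := by
  let L := toEuclidean (E := E)
  have hcont : Continuous (L ∘ g ∘ L.symm) := L.continuous.comp (hg.comp L.symm.continuous)
  have hsupp : HasCompactSupport (L ∘ g ∘ L.symm) :=
    (hgs.comp_homeomorph L.symm.toHomeomorph).comp_left L.map_zero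
  obtain ⟨x, hx⟩ := exists_add_eq_zero_of_continuous_inner hcont hsupp
  exact ⟨L.symm x, L.injective (by simpa using hx)⟩

end Zeros

section Brouwer

variable {E : Type*} [NormedAddCommGroup E] [NormedSpace ℝ E] [FiniteDimensional ℝ E]

lemma exists_isFixedPt_of_bounded {h : E → E} (hh : Continuous h) {ρ : ℝ}
    (hρ : ∀ x, ‖h x‖ ≤ ρ) : ∃ x, IsFixedPt h x := by
  have hρ₀ : 0 ≤ ρ := (norm_nonneg _).trans (hρ 0)
  let χ : ContDiffBump (0 : E) := ⟨ρ + 1, ρ + 2, by linarith, by linarith⟩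
  obtain ⟨x, hx⟩ := exists_add_eq_zero_of_continuous (g := fun x ↦ -(χ x • h x))
    (χ.continuous.smul hh).neg χ.hasCompactSupport.smul_right.neg
  have hfix : χ x • h x = x := (add_neg_eq_zero.mp hx).symm
  have hx_norm : ‖x‖ ≤ ρ := by
    rw [← hfix, norm_smul, Real.norm_of_nonneg χ.nonneg]
    exact (mul_le_of_le_one_left (norm_nonneg _) χ.le_one).trans (hρ x)
  have hχ : χ x = 1 :=
    χ.one_of_mem_closedBall (mem_closedBall_zero_iff.mpr (hx_norm.trans (by simp [χ])))
  exact ⟨x, by rwa [hχ, one_smul] at hfix⟩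

theorem exists_isFixedPt_of_mapsTo_closedBall {a : E} {R : ℝ} (hR : 0 < R) {h : E → E}
    (hh : ContinuousOn h (closedBall a R)) (hmaps : MapsTo h (closedBall a R) (closedBall a R)) :
    ∃ x ∈ closedBall a R, IsFixedPt h x := by
  have := Metric.instTietzeExtensionClosedBall ℝ a hR
  obtain ⟨H, hHmem, hHeq⟩ := ContinuousMap.exists_forall_mem_restrict_eq isClosed_closedBall
    ⟨_, hh.domRestrict⟩ fun x : closedBall a R ↦ hmaps x.2
  have hbound (x : E) : ‖H x‖ ≤ ‖a‖ + R := norm_le_of_mem_closedBall (hHmem x)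
  obtain ⟨x, hx⟩ := exists_isFixedPt_of_bounded H.continuous hbound
  have hxmem : x ∈ closedBall a R := hx ▸ hHmem x
  have heq : H x = h x := DFunLike.congr_fun hHeq ⟨x, hxmem⟩
  exact ⟨x, hxmem, heq.symm.trans hx⟩

end Brouwer

section PerturbedGraphs

lemma mapsTo_closedBall_half_of_close {X Y : Type*} [NormedAddCommGroup X] [NormedAddCommGroup Y]
    {r c : ℝ} (hr : 0 < r) (hc : 0 ≤ c) {f f' : X → Y} (hf : ∀ x ∈ ball 0 r, ‖f x‖ ≤ c * ‖x‖)
    (hclose : ∀ x ∈ ball 0 r, ‖f x - f' x‖ ≤ (1 - c) * r / 2) :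
    MapsTo f' (closedBall 0 (r / 2)) (closedBall 0 (r / 2)) := by
  intro x hx
  have hxr : x ∈ ball 0 r := closedBall_subset_ball (half_lt_self hr) hx
  rw [mem_closedBall_zero_iff] at hx ⊢
  calc ‖f' x‖ = ‖f x - (f x - f' x)‖ := by rw [sub_sub_cancel]
    _ ≤ ‖f x‖ + ‖f x - f' x‖ := norm_sub_le _ _
    _ ≤ c * ‖x‖ + (1 - c) * r / 2 := add_le_add (hf x hxr) (hclose x hxr)
    _ ≤ c * (r / 2) + (1 - c) * r / 2 := by gcongr
    _ = r / 2 := by ring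

theorem stmt10_general {X₁ X₂ : Type*}
    [NormedAddCommGroup X₁] [NormedSpace ℝ X₁] [FiniteDimensional ℝ X₁] [NormedAddCommGroup X₂]
    {r c : ℝ} (hr : 0 < r) (hc : 0 ≤ c) (z : X₁ × X₂) {θ tθ : X₁ → X₂} {σ tσ : X₂ → X₁}
    (hθ : ∀ y ∈ ball (0 : X₁) r, ‖θ y‖ ≤ c * ‖y‖) (hσ : ∀ x ∈ ball (0 : X₂) r, ‖σ x‖ ≤ c * ‖x‖)
    (htθ : ContinuousOn tθ (ball 0 r)) (htσ : ContinuousOn tσ (ball 0 r))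
    (hθclose : ∀ y ∈ ball (0 : X₁) r, ‖θ y - tθ y‖ ≤ (1 - c) * r / 2)
    (hσclose : ∀ x ∈ ball (0 : X₂) r, ‖σ x - tσ x‖ ≤ (1 - c) * r / 2) :
    ({p : X₁ × X₂ | ∃ y ∈ ball (0 : X₁) r, p = z + (y, tθ y)} ∩
      {p : X₁ × X₂ | ∃ x ∈ ball (0 : X₂) r, p = z + (tσ x, x)}).Nonempty := by
  have hθmaps := mapsTo_closedBall_half_of_close hr hc hθ hθclose
  have hσmaps := mapsTo_closedBall_half_of_close hr hc hσ hσclose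
  have hsub₁ : closedBall (0 : X₁) (r / 2) ⊆ ball 0 r := closedBall_subset_ball (half_lt_self hr)
  have hsub₂ : closedBall (0 : X₂) (r / 2) ⊆ ball 0 r := closedBall_subset_ball (half_lt_self hr)
  obtain ⟨y, hy, hfix⟩ := exists_isFixedPt_of_mapsTo_closedBall (half_pos hr)
    ((htσ.mono hsub₂).comp (htθ.mono hsub₁) hθmaps) (hσmaps.comp hθmaps)
  have hfix_eq : tσ (tθ y) = y := hfix
  exact ⟨z + (y, tθ y), ⟨y, hsub₁ hy, rfl⟩, tθ y, hsub₂ (hθmaps hy), by rw [hfix_eq]⟩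

end PerturbedGraphs

/-- Persistence of transversal intersections (finite-dimensional case, via
Brouwer's fixed point theorem): the perturbed graphs intersect. -/
theorem stmt10 {X₁ X₂ : Type*}
    [NormedAddCommGroup X₁] [NormedSpace ℝ X₁] [FiniteDimensional ℝ X₁]
    [NormedAddCommGroup X₂] [NormedSpace ℝ X₂] [CompleteSpace X₂]
    (r c : ℝ) (hr : 0 < r) (hc0 : 0 < c) (hc1 : c < 1) (z : X₁ × X₂)
    (θ tθ : X₁ → X₂) (σ tσ : X₂ → X₁)
    (hθ0 : θ 0 = 0) (hσ0 : σ 0 = 0)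
    (hθLip : ∀ y₁ ∈ Metric.ball (0 : X₁) r, ∀ y₂ ∈ Metric.ball (0 : X₁) r,
      ‖θ y₁ - θ y₂‖ ≤ c * ‖y₁ - y₂‖)
    (hσLip : ∀ x₁ ∈ Metric.ball (0 : X₂) r, ∀ x₂ ∈ Metric.ball (0 : X₂) r,
      ‖σ x₁ - σ x₂‖ ≤ c * ‖x₁ - x₂‖)
    (htθcont : ContinuousOn tθ (Metric.ball (0 : X₁) r))
    (htσcont : ContinuousOn tσ (Metric.ball (0 : X₂) r))
    (hθclose : ∀ y ∈ Metric.ball (0 : X₁) r, ‖θ y - tθ y‖ ≤ (1 - c) * r / 2)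
    (hσclose : ∀ x ∈ Metric.ball (0 : X₂) r, ‖σ x - tσ x‖ ≤ (1 - c) * r / 2) :
    ({p : X₁ × X₂ | ∃ y ∈ Metric.ball (0 : X₁) r, p = z + (y, tθ y)} ∩
      {p : X₁ × X₂ | ∃ x ∈ Metric.ball (0 : X₂) r, p = z + (tσ x, x)}).Nonempty :=
  stmt10_general hr hc0.le z
    (fun y hy ↦ by simpa [hθ0] using hθLip y hy 0 (mem_ball_self hr))
    (fun x hx ↦ by simpa [hσ0] using hσLip x hx 0 (mem_ball_self hr))
    htθcont htσcont hθclose hσclose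
end

section
/- Let $X_u, X_s$ be Banach spaces, $X = X_u \times X_s$ with norm $\|(x_u,x_s)\| = \max\{\|x_u\|,\|x_s\|\}$, and $\pi_u : X \to X_u$ the projection. Let $V_u \subseteq X_u$ be an open neighborhood of $0$, $\theta : V_u \to X_s$ a Lipschitz map with $\theta(0) = 0$, and define $\varphi : V_u \to X$ by $\varphi(\xi) = (\xi, \theta(\xi))$. Let $\psi : V_u \to X$ satisfy $\max\{\sup_{\xi \in V_u}\|\varphi(\xi)-\psi(\xi)\|,\ \mathrm{Lip}(\varphi - \psi)\} \le \varepsilon$ for some $\varepsilon < 1/2$. Then: (a) the set $W_u = \pi_u(\psi(V_u))$ is open in $X_u$ and contains $\pi_u(\psi(0))$; (b) if $B_r^{X_u}(0) \subseteq V_u$ and $r_0 = r - \varepsilon > 0$, then $B_{r_0}^{X_u}(0) \subseteq V_u \cap W_u$; (c) there exists $\tilde\theta : W_u \to X_s$ such that $\psi(V_u) = \{(\eta, \tilde\theta(\eta)) : \eta \in W_u\}$, with $\mathrm{Lip}(\tilde\theta) \le (\mathrm{Lip}(\theta) + \varepsilon)/(1-\varepsilon)$ and $\sup_{\eta \in V_u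 \cap W_u}\|\tilde\theta(\eta) - \theta(\eta)\| \le (1 + \mathrm{Lip}(\theta))\varepsilon$. -/
/-! The first component `f` of `ψ` differs from the identity by an `ε`-Lipschitz map with `ε < 1`.
Hence `f` is antilipschitz with constant `(1 - ε)⁻¹` and, by the inverse function theorem for
Lipschitz perturbations of linear maps, open. The equation `f x = y` says that `x` is a fixed point
of the contraction `x ↦ y + (x - f x)`, which maps the closed ball of radius `ε` around `y` into
itself as soon as that ball lies in the domain; this is the inclusion of balls. The perturbed graph
function is the second component of `ψ` composed with `f⁻¹`. -/

open Metric Set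
open scoped NNReal

section Graph

variable {α β γ : Type*}

lemma exists_image_eq_graphOn_and_lipschitzOnWith [EMetricSpace α] [PseudoEMetricSpace β]
    [PseudoEMetricSpace γ] [Nonempty γ] {s : Set α} {ψ : α → β × γ} {K L : ℝ≥0}
    (hfst : AntilipschitzWith K (s.domRestrict fun x => (ψ x).1))
    (hsnd : LipschitzOnWith L (fun x => (ψ x).2) s) :
    ∃ t : β → γ, ψ '' s = ((fun x => (ψ x).1) '' s).graphOn t ∧
      LipschitzOnWith (L * K) t ((fun x => (ψ x).1) '' s) := by
  obtain ⟨t, ht⟩ : ∃ t : β → γ, ∀ x ∈ s, t (ψ x).1 = (ψ x).2 :=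
    ⟨Function.extend (s.domRestrict fun x => (ψ x).1) (s.domRestrict fun x => (ψ x).2)
        fun _ => Classical.arbitrary γ,
      fun x hx => hfst.injective.extend_apply _ _ ⟨x, hx⟩⟩
  refine ⟨t, ?_, ?_⟩
  · rw [graphOn, image_image]
    exact image_congr fun x hx => Prod.ext rfl (ht x hx).symm
  · rintro _ ⟨x, hx, rfl⟩ _ ⟨y, hy, rfl⟩
    calc edist (t (ψ x).1) (t (ψ y).1) = edist (ψ x).2 (ψ y).2 := by rw [ht x hx, ht y hy]
      _ ≤ L * edist x y := hsnd hx hy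
      _ ≤ L * (K * edist (ψ x).1 (ψ y).1) := by gcongr; exact hfst ⟨x, hx⟩ ⟨y, hy⟩
      _ = ↑(L * K) * edist (ψ x).1 (ψ y).1 := by rw [ENNReal.coe_mul, mul_assoc]

lemma dist_snd_le_of_dist_graph_le [PseudoMetricSpace α] [PseudoMetricSpace β] {s : Set α}
    {θ : α → β} {K : ℝ≥0} {δ : ℝ} {x : α} {p : α × β} (hθ : LipschitzOnWith K θ s) (hx : x ∈ s)
    (hp : p.1 ∈ s) (hxp : dist (x, θ x) p ≤ δ) : dist p.2 (θ p.1) ≤ (1 + K) * δ := by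
  obtain ⟨hfst, hsnd⟩ := max_le_iff.mp hxp
  calc dist p.2 (θ p.1) ≤ dist (θ x) p.2 + dist (θ x) (θ p.1) := dist_triangle_left _ _ _
    _ ≤ δ + K * δ := add_le_add hsnd ((hθ.dist_le_mul x hx _ hp).trans (by gcongr))
    _ = (1 + K) * δ := by ring

end Graph

section IdSub

lemma antilipschitzWith_of_lipschitzOnWith_id_sub {E : Type*} [SeminormedAddCommGroup E]
    {f : E → E} {s : Set E} {ε : ℝ≥0} (hε : ε < 1) (hf : LipschitzOnWith ε (fun x => x - f x) s) :
    AntilipschitzWith (1 - ε)⁻¹ (s.domRestrict f) := by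
  have hsum := (AntilipschitzWith.subtype_coe s).add_lipschitzWith hf.to_restrict.neg (by simpa)
  simpa [domRestrict_def] using hsum

variable {E : Type*} [NormedAddCommGroup E] {f : E → E} {s : Set E} {ε : ℝ≥0}

lemma isOpen_image_of_lipschitzOnWith_id_sub [NormedSpace ℝ E] [CompleteSpace E] (hs : IsOpen s)
    (hε : ε < 1) (hf : LipschitzOnWith ε (fun x => x - f x) s) : IsOpen (f '' s) := by
  have happrox : ApproximatesLinearOn f (.id ℝ E) s ε := by
    have hsub : f - ContinuousLinearMap.id ℝ E = -fun x => x - f x := by ext; simp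
    exact LipschitzOnWith.approximatesLinearOn (hsub ▸ hf.neg)
  exact happrox.open_image ⟨id, 1, by simp, fun _ => rfl⟩ hs (.inr (by simpa))

lemma mem_image_of_mapsTo_add_id_sub {y : E} (hs : IsComplete s) (hne : s.Nonempty) (hε : ε < 1)
    (hf : LipschitzOnWith ε (fun x => x - f x) s) (hmaps : MapsTo (fun x => y + (x - f x)) s s) :
    y ∈ f '' s := by
  have hcontr : ContractingWith ε (hmaps.restrict _ s s) :=
    ⟨hε, LipschitzOnWith.mapsToRestrict hmaps (by
      simpa using (LipschitzWith.const y).lipschitzOnWith.add hf)⟩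
  obtain ⟨x₀, hx₀⟩ := hne
  obtain ⟨x, hx, hfix, -⟩ := hcontr.exists_fixedPoint' hs hmaps hx₀ (edist_ne_top _ _)
  have hyx : y - f x = 0 := by
    rw [← add_eq_left (a := x), add_sub_left_comm]
    exact hfix.eq
  exact ⟨x, hx, (sub_eq_zero.mp hyx).symm⟩

lemma ball_sub_subset_image_of_lipschitzOnWith_id_sub [CompleteSpace E] {c : E} {r δ : ℝ}
    (hδ : 0 ≤ δ) (hε : ε < 1) (hf : LipschitzOnWith ε (fun x => x - f x) (ball c r))
    (hdist : ∀ x ∈ ball c r, ‖x - f x‖ ≤ δ) : ball c (r - δ) ⊆ f '' ball c r := by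
  intro y hy
  have hsub : closedBall y δ ⊆ ball c r :=
    closedBall_subset_ball' (by linarith [mem_ball.mp hy])
  have hmaps : MapsTo (fun x => y + (x - f x)) (closedBall y δ) (closedBall y δ) := fun x hx => by
    simpa [mem_closedBall_iff_norm] using hdist x (hsub hx)
  exact image_mono hsub <| mem_image_of_mapsTo_add_id_sub isClosed_closedBall.isComplete
    (nonempty_closedBall.mpr hδ) hε (hf.mono hsub) hmaps

end IdSub

theorem stmt14_general {Xu Xs : Type*}
    [NormedAddCommGroup Xu] [NormedSpace ℝ Xu] [CompleteSpace Xu]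
    [SeminormedAddCommGroup Xs]
    {Vu : Set Xu} (hVu : IsOpen Vu) {θ : Xu → Xs} {cθ : ℝ} (hcθ : 0 ≤ cθ)
    (hθLip : ∀ ξ₁ ∈ Vu, ∀ ξ₂ ∈ Vu, ‖θ ξ₁ - θ ξ₂‖ ≤ cθ * ‖ξ₁ - ξ₂‖)
    {ψ : Xu → Xu × Xs} {ε : ℝ} (hε0 : 0 ≤ ε) (hε : ε < 1)
    (hclose : ∀ ξ ∈ Vu, ‖(ξ, θ ξ) - ψ ξ‖ ≤ ε)
    (hcloseLip : ∀ ξ₁ ∈ Vu, ∀ ξ₂ ∈ Vu,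
      ‖((ξ₁, θ ξ₁) - ψ ξ₁) - ((ξ₂, θ ξ₂) - ψ ξ₂)‖ ≤ ε * ‖ξ₁ - ξ₂‖)
    {Wu : Set Xu} (hWu : Wu = (fun ξ => (ψ ξ).1) '' Vu) :
    IsOpen Wu ∧
    (∀ (c : Xu) (R : ℝ), ball c R ⊆ Vu → ball c (R - ε) ⊆ Vu ∩ Wu) ∧
    (∃ tθ : Xu → Xs,
      ψ '' Vu = (fun η => (η, tθ η)) '' Wu ∧
      (∀ η₁ ∈ Wu, ∀ η₂ ∈ Wu, ‖tθ η₁ - tθ η₂‖ ≤ (cθ + ε) / (1 - ε) * ‖η₁ - η₂‖) ∧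
      (∀ η ∈ Vu ∩ Wu, ‖tθ η - θ η‖ ≤ (1 + cθ) * ε)) := by
  subst hWu
  lift cθ to ℝ≥0 using hcθ
  lift ε to ℝ≥0 using hε0
  have hε1 : ε < 1 := mod_cast hε
  have hθ : LipschitzOnWith cθ θ Vu := lipschitzOnWith_iff_norm_sub_le.mpr hθLip
  have hdiff : LipschitzOnWith ε (fun ξ => (ξ, θ ξ) - ψ ξ) Vu :=
    lipschitzOnWith_iff_norm_sub_le.mpr hcloseLip
  have hfst : LipschitzOnWith ε (fun ξ => ξ - (ψ ξ).1) Vu := by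
    simpa [Function.comp_def] using LipschitzWith.prod_fst.comp_lipschitzOnWith hdiff
  have hsnd : LipschitzOnWith (cθ + ε) (fun ξ => (ψ ξ).2) Vu := by
    simpa [Function.comp_def] using hθ.sub (LipschitzWith.prod_snd.comp_lipschitzOnWith hdiff)
  refine ⟨isOpen_image_of_lipschitzOnWith_id_sub hVu hε1 hfst, fun c R hR => subset_inter ?_ ?_, ?_⟩
  · exact (ball_subset_ball (sub_le_self R ε.2)).trans hR
  · exact (ball_sub_subset_image_of_lipschitzOnWith_id_sub ε.2 hε1 (hfst.mono hR) fun ξ hξ =>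
      (norm_fst_le _).trans (hclose ξ (hR hξ))).trans (image_mono hR)
  · obtain ⟨tθ, hgraph, htθ⟩ := exists_image_eq_graphOn_and_lipschitzOnWith
      (antilipschitzWith_of_lipschitzOnWith_id_sub hε1 hfst) hsnd
    refine ⟨tθ, hgraph, ?_, ?_⟩
    · simpa [div_eq_mul_inv, NNReal.coe_sub hε1.le] using lipschitzOnWith_iff_norm_sub_le.mp htθ
    · rintro _ ⟨hξV, ξ, hξ, rfl⟩
      have hψ : tθ (ψ ξ).1 = (ψ ξ).2 :=
        (mem_graphOn.mp (hgraph ▸ mem_image_of_mem ψ hξ)).2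
      rw [hψ, ← dist_eq_norm]
      exact dist_snd_le_of_dist_graph_le hθ hξ hξV ((dist_eq_norm _ _).trans_le (hclose ξ hξ))

/-- Perturbation of Lipschitz graphs: if `ψ` is `ε`-Lipschitz close to the graph
map `φ(ξ) = (ξ, θ(ξ))` on `V_u` with `ε < 1/2`, then `ψ(V_u)` is again a
Lipschitz graph over the open set `W_u = π_u(ψ(V_u))`. -/
theorem stmt14 {Xu Xs : Type*}
    [NormedAddCommGroup Xu] [NormedSpace ℝ Xu] [CompleteSpace Xu]
    [NormedAddCommGroup Xs] [NormedSpace ℝ Xs] [CompleteSpace Xs]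
    (Vu : Set Xu) (hVu : IsOpen Vu) (h0Vu : (0 : Xu) ∈ Vu)
    (θ : Xu → Xs) (cθ : ℝ) (hcθ : 0 ≤ cθ) (hθ0 : θ 0 = 0)
    (hθLip : ∀ ξ₁ ∈ Vu, ∀ ξ₂ ∈ Vu, ‖θ ξ₁ - θ ξ₂‖ ≤ cθ * ‖ξ₁ - ξ₂‖)
    (ψ : Xu → Xu × Xs) (ε : ℝ) (hε0 : 0 ≤ ε) (hε : ε < 1 / 2)
    (hclose : ∀ ξ ∈ Vu, ‖(ξ, θ ξ) - ψ ξ‖ ≤ ε)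
    (hcloseLip : ∀ ξ₁ ∈ Vu, ∀ ξ₂ ∈ Vu,
      ‖((ξ₁, θ ξ₁) - ψ ξ₁) - ((ξ₂, θ ξ₂) - ψ ξ₂)‖ ≤ ε * ‖ξ₁ - ξ₂‖)
    (Wu : Set Xu) (hWu : Wu = (fun ξ => (ψ ξ).1) '' Vu) :
    (IsOpen Wu ∧ (ψ 0).1 ∈ Wu) ∧
    (∀ R : ℝ, Metric.ball (0 : Xu) R ⊆ Vu → 0 < R - ε →
      Metric.ball (0 : Xu) (R - ε) ⊆ Vu ∩ Wu) ∧
    (∃ tθ : Xu → Xs,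
      ψ '' Vu = (fun η => (η, tθ η)) '' Wu ∧
      (∀ η₁ ∈ Wu, ∀ η₂ ∈ Wu, ‖tθ η₁ - tθ η₂‖ ≤ (cθ + ε) / (1 - ε) * ‖η₁ - η₂‖) ∧
      (∀ η ∈ Vu ∩ Wu, ‖tθ η - θ η‖ ≤ (1 + cθ) * ε)) := by
  obtain ⟨hopen, hball, hgraph⟩ :=
    stmt14_general hVu hcθ hθLip hε0 (by linarith) hclose hcloseLip hWu
  exact ⟨⟨hopen, hWu ▸ mem_image_of_mem _ h0Vu⟩, fun R hR _ => hball 0 R hR, hgraph⟩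
end

section
/- Let $\Omega$ be a nonempty bounded open subset of $\mathbb{R}^n$ with Lebesgue measure, let $1 \le p < \infty$, and let $f : \mathbb{R} \to \mathbb{R}$ be differentiable and globally Lipschitz continuous. Consider the Nemytskii operator $f^e : L^p(\Omega) \to L^p(\Omega)$ defined by $f^e(u)(x) = f(u(x))$ for a.e. $x \in \Omega$. If $f^e$ is Fréchet differentiable at a point $u_0 \in L^p(\Omega)$, then for every $h \in L^p(\Omega)$ the derivative acts as multiplication by $f' \circ u_0$: $[Df^e(u_0)h](x) = f'(u_0(x))\, h(x)$ for a.e. $x \in \Omega$. -/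
open MeasureTheory ENNReal

/-!
Difference quotients of a Nemytskii operator are, almost everywhere, difference quotients of `f`.
In the direction `h` the former converge in `L^q`, hence in measure, to the directional derivative
of the operator, while the latter converge pointwise to `x ↦ f' (u₀ x) (h x)`. Along a sequence for
which the convergence in measure is almost everywhere, the two limits coincide.
-/

open Filter Topology

section ConvergenceInMeasure

variable {α ι E : Type*} [MeasurableSpace α] {μ : Measure α} [EMetricSpace E]

theorem ae_eq_of_tendstoInMeasure_of_tendsto_ae {l : Filter ι} [l.NeBot] [l.IsCountablyGenerated]
    {φ : ι → α → E} {g g' : α → E} (hg : TendstoInMeasure μ φ l g)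
    (hg' : ∀ᵐ x ∂μ, Tendsto (φ · x) l (𝓝 (g' x))) : g =ᵐ[μ] g' := by
  obtain ⟨s, hs, hsg⟩ := hg.exists_seq_tendsto_ae'
  filter_upwards [hsg, hg'] with x hx hx'
  exact tendsto_nhds_unique hx (hx'.comp hs)

end ConvergenceInMeasure

section Nemytskii

variable {α E F : Type*} [MeasurableSpace α] {μ : Measure α}
  [NormedAddCommGroup E] [NormedAddCommGroup F] {p q : ℝ≥0∞}

/-- `N` is the Nemytskii (superposition) operator `u ↦ f ∘ u` from `L^p` to `L^q`. This is a relation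
between `f` and `N` because `f ∘ u` need not lie in `L^q` for a general `f`. -/
def IsNemytskiiOperator (f : E → F) (N : Lp E p μ → Lp F q μ) : Prop :=
  ∀ u, N u =ᵐ[μ] f ∘ u

variable {𝕜 : Type*} [NontriviallyNormedField 𝕜] [NormedSpace 𝕜 E] [NormedSpace 𝕜 F]
  {f : E → F} {N : Lp E p μ → Lp F q μ}

namespace IsNemytskiiOperator

theorem coeFn_slope (hN : IsNemytskiiOperator f N) (u h : Lp E p μ) (t : 𝕜) :
    ⇑(t⁻¹ • (N (u + t • h) - N u)) =ᵐ[μ] fun x => t⁻¹ • (f (u x + t • h x) - f (u x)) := by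
  filter_upwards [Lp.coeFn_smul t⁻¹ (N (u + t • h) - N u), Lp.coeFn_sub (N (u + t • h)) (N u),
    hN (u + t • h), hN u, Lp.coeFn_add u (t • h), Lp.coeFn_smul t h]
    with x h_smul h_sub h_shift h_base h_add h_dir
  simp only [h_smul, h_sub, h_shift, h_base, h_add, h_dir, Pi.smul_apply, Pi.sub_apply,
    Pi.add_apply, Function.comp_apply]

theorem tendstoInMeasure_slope [Fact (1 ≤ q)] (hN : IsNemytskiiOperator f N) {u h : Lp E p μ}
    {g : Lp F q μ} (hg : HasLineDerivAt 𝕜 N g u h) :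
    TendstoInMeasure μ (fun (t : 𝕜) x => t⁻¹ • (f (u x + t • h x) - f (u x))) (𝓝[≠] 0) g :=
  (tendstoInMeasure_of_tendsto_Lp hg.tendsto_slope_zero).congr_left (hN.coeFn_slope u h)

theorem ae_eq_of_hasLineDerivAt [Fact (1 ≤ q)] (hN : IsNemytskiiOperator f N) {u h : Lp E p μ}
    {g : Lp F q μ} (hg : HasLineDerivAt 𝕜 N g u h) {f' : α → F}
    (hf : ∀ᵐ x ∂μ, HasLineDerivAt 𝕜 f (f' x) (u x) (h x)) : g =ᵐ[μ] f' :=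
  ae_eq_of_tendstoInMeasure_of_tendsto_ae (hN.tendstoInMeasure_slope hg)
    (hf.mono fun _ hx => hx.tendsto_slope_zero)

end IsNemytskiiOperator

theorem stmt17_general [Fact (1 ≤ p)] [Fact (1 ≤ q)] (hN : IsNemytskiiOperator f N)
    {u₀ : Lp E p μ} (hf : ∀ᵐ x ∂μ, DifferentiableAt 𝕜 f (u₀ x)) {D : Lp E p μ →L[𝕜] Lp F q μ}
    (hD : HasFDerivAt N D u₀) (h : Lp E p μ) :
    D h =ᵐ[μ] fun x => fderiv 𝕜 f (u₀ x) (h x) :=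
  hN.ae_eq_of_hasLineDerivAt (hD.hasLineDerivAt h)
    (hf.mono fun x hx => hx.hasFDerivAt.hasLineDerivAt (h x))

end Nemytskii

/-- If the Nemytskii operator of a differentiable, globally Lipschitz
`f : ℝ → ℝ` on `L^p(Ω)` is Fréchet differentiable at `u₀`, then its derivative
acts as multiplication by `f' ∘ u₀`. -/
theorem stmt17 {n : ℕ} (Ω : Set (Fin n → ℝ)) (hΩo : IsOpen Ω) (hΩne : Ω.Nonempty)
    (hΩb : Bornology.IsBounded Ω)
    (p : ℝ≥0∞) [Fact (1 ≤ p)] (hp : p ≠ ⊤)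
    (f : ℝ → ℝ) (hdiff : Differentiable ℝ f) (K : NNReal) (hK : LipschitzWith K f)
    (fe : Lp ℝ p (volume.restrict Ω) → Lp ℝ p (volume.restrict Ω))
    (hfe : ∀ u : Lp ℝ p (volume.restrict Ω),
      (fe u : (Fin n → ℝ) → ℝ) =ᵐ[volume.restrict Ω] fun x => f (u x))
    (u₀ : Lp ℝ p (volume.restrict Ω))
    (D : Lp ℝ p (volume.restrict Ω) →L[ℝ] Lp ℝ p (volume.restrict Ω))
    (hD : HasFDerivAt fe D u₀) :
    ∀ h : Lp ℝ p (volume.restrict Ω),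
      (D h : (Fin n → ℝ) → ℝ) =ᵐ[volume.restrict Ω]
        fun x => deriv f (u₀ x) * h x := by
  simpa only [fderiv_eq_smul_deriv, smul_eq_mul, mul_comm] using
    stmt17_general hfe (ae_of_all _ fun x => hdiff (u₀ x)) hD
end
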